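/- arXiv:2105.06922 — 4 statements merged into one kernel-verified Lean document; each statement's English description precedes it below -/
import Mathlib

section
/- Let X be a nonempty type and D : X → X → ℝ a weak metric: D is symmetric, D(x,x) = 0 for all x, and there exists a metric D' on X (D' is symmetric, nonnegative, satisfies the triangle inequality, and D'(x,y) = 0 iff x = y) with D'(x,y) ≤ D(x,y) for all x, y. For each natural number N define D_N(x,y) as the infimum, over all chains z : Fin (N+2) → X with z 0 = x and z (N+1) = y, of ∑_{i=0}^{N} D(z_i, z_{i+1}); and define D_∞(x,y) := ⨅_{N ∈ ℕ} D_N(x,y). Then D_∞ is a metric on X (symmetric, D_∞(x,y) = 0 iff x = y, triangle inequality), D_∞(x,y) ≤ D(x,y) for all x, y, and D_∞ is the maximum metric dominated by D: every metric D'' on X with D''(x,y) ≤ D(x,y) for all x, y satisfies D''(x,y) ≤ D_∞(x,y) for all x, y. -/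
/-- The infimal cost of a chain of `N+1` steps joining `x` to `y`. -/
noncomputable def chainDist {X : Type*} (D : X → X → ℝ) (N : ℕ) (x y : X) : ℝ :=
  sInf {s : ℝ | ∃ z : Fin (N + 2) → X, z 0 = x ∧ z (Fin.last (N + 1)) = y ∧
    s = ∑ i : Fin (N + 1), D (z i.castSucc) (z i.succ)}

/-- The induced metric: the infimum over all chain lengths. -/
noncomputable def inducedDist {X : Type*} (D : X → X → ℝ) (x y : X) : ℝ :=
  ⨅ N : ℕ, chainDist D N x y

/-- The costs of the chains of `N + 1` steps joining `x` to `y`. -/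
def chainCosts {X : Type*} (D : X → X → ℝ) (N : ℕ) (x y : X) : Set ℝ :=
  {s : ℝ | ∃ z : Fin (N + 2) → X, z 0 = x ∧ z (Fin.last (N + 1)) = y ∧
    s = ∑ i : Fin (N + 1), D (z i.castSucc) (z i.succ)}

namespace chainCosts

variable {X : Type*} {D b : X → X → ℝ}

theorem mem_zero {x y : X} {s : ℝ} : s ∈ chainCosts D 0 x y ↔ s = D x y := by
  constructor
  · rintro ⟨z, rfl, rfl, rfl⟩
    simp
  · rintro rfl
    exact ⟨![x, y], rfl, rfl, by simp⟩

theorem mem_succ {N : ℕ} {x y : X} {s : ℝ} :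
    s ∈ chainCosts D (N + 1) x y ↔ ∃ w, ∃ t ∈ chainCosts D N w y, s = D x w + t := by
  constructor
  · rintro ⟨z, rfl, rfl, rfl⟩
    refine ⟨z 1, _, ⟨fun i => z i.succ, rfl, rfl, rfl⟩, ?_⟩
    rw [Fin.sum_univ_succ]
    rfl
  · rintro ⟨w, t, ⟨z, rfl, rfl, rfl⟩, rfl⟩
    refine ⟨Fin.cons x z, rfl, rfl, ?_⟩
    exact (Fin.sum_univ_succ
      fun i => D ((Fin.cons x z : Fin (N + 3) → X) i.castSucc) (z i)).symm

theorem nonempty (N : ℕ) (x y : X) : (chainCosts D N x y).Nonempty := by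
  induction N generalizing x with
  | zero => exact ⟨_, mem_zero.2 rfl⟩
  | succ N ih =>
    obtain ⟨t, ht⟩ := ih x
    exact ⟨_, mem_succ.2 ⟨x, t, ht, rfl⟩⟩

theorem add_mem {N M : ℕ} {x y z : X} {s t : ℝ} (hs : s ∈ chainCosts D N x y)
    (ht : t ∈ chainCosts D M y z) : s + t ∈ chainCosts D (M + N + 1) x z := by
  induction N generalizing x s with
  | zero => exact mem_succ.2 ⟨y, t, ht, by rw [mem_zero.1 hs]⟩
  | succ N ih =>
    obtain ⟨w, r, hr, rfl⟩ := mem_succ.1 hs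
    exact mem_succ.2 ⟨w, r + t, ih hr, add_assoc _ _ _⟩

theorem symm (hsymm : ∀ x y, D x y = D y x) {N : ℕ} {x y : X} {s : ℝ}
    (hs : s ∈ chainCosts D N x y) : s ∈ chainCosts D N y x := by
  induction N generalizing x s with
  | zero => rwa [mem_zero, hsymm, ← mem_zero]
  | succ N ih =>
    obtain ⟨w, r, hr, rfl⟩ := mem_succ.1 hs
    have h := add_mem (ih hr) (mem_zero.2 (hsymm x w))
    rwa [zero_add, add_comm r] at h

theorem le_of_mem (htri : ∀ x y z, b x z ≤ b x y + b y z) (hle : ∀ x y, b x y ≤ D x y)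
    {N : ℕ} {x y : X} {s : ℝ} (hs : s ∈ chainCosts D N x y) : b x y ≤ s := by
  induction N generalizing x s with
  | zero => exact (hle x y).trans_eq (mem_zero.1 hs).symm
  | succ N ih =>
    obtain ⟨w, r, hr, rfl⟩ := mem_succ.1 hs
    exact (htri x w y).trans (add_le_add (hle x w) (ih hr))

end chainCosts

section inducedDist

variable {X : Type*} {D b : X → X → ℝ}

theorem le_chainDist {N : ℕ} {x y : X} {c : ℝ} (h : ∀ s ∈ chainCosts D N x y, c ≤ s) :
    c ≤ chainDist D N x y :=
  le_csInf (chainCosts.nonempty N x y) h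

theorem le_inducedDist {x y : X} {c : ℝ} (h : ∀ N, ∀ s ∈ chainCosts D N x y, c ≤ s) :
    c ≤ inducedDist D x y :=
  le_ciInf fun N => le_chainDist (h N)

theorem inducedDist_le_of_mem (htri : ∀ x y z, b x z ≤ b x y + b y z)
    (hle : ∀ x y, b x y ≤ D x y) {N : ℕ} {x y : X} {s : ℝ} (hs : s ∈ chainCosts D N x y) :
    inducedDist D x y ≤ s := by
  have hbdd : BddBelow (Set.range fun N => chainDist D N x y) := by
    refine ⟨b x y, ?_⟩
    rintro _ ⟨M, rfl⟩
    exact le_chainDist fun _ => chainCosts.le_of_mem htri hle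
  have hchain : chainDist D N x y ≤ s :=
    csInf_le ⟨b x y, fun _ => chainCosts.le_of_mem htri hle⟩ hs
  exact (ciInf_le hbdd N).trans hchain

end inducedDist

/-- a weak metric induces a maximum metric dominated by it. -/
theorem inducedDist_is_max_metric {X : Type*} [Nonempty X] (D : X → X → ℝ)
    (hsymm : ∀ x y, D x y = D y x) (hzero : ∀ x, D x x = 0)
    (D' : X → X → ℝ)
    (hD'symm : ∀ x y, D' x y = D' y x)
    (hD'nonneg : ∀ x y, 0 ≤ D' x y)
    (hD'eq : ∀ x y, D' x y = 0 ↔ x = y)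
    (hD'tri : ∀ x y z, D' x z ≤ D' x y + D' y z)
    (hle : ∀ x y, D' x y ≤ D x y) :
    (∀ x y, inducedDist D x y = inducedDist D y x) ∧
    (∀ x y, 0 ≤ inducedDist D x y) ∧
    (∀ x y, inducedDist D x y = 0 ↔ x = y) ∧
    (∀ x y z, inducedDist D x z ≤ inducedDist D x y + inducedDist D y z) ∧
    (∀ x y, inducedDist D x y ≤ D x y) ∧
    (∀ D'' : X → X → ℝ,
      (∀ x y, D'' x y = D'' y x) → (∀ x y, 0 ≤ D'' x y) →
      (∀ x y, D'' x y = 0 ↔ x = y) → (∀ x y z, D'' x z ≤ D'' x y + D'' y z) →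
      (∀ x y, D'' x y ≤ D x y) →
      ∀ x y, D'' x y ≤ inducedDist D x y) := by
  have hind {N : ℕ} {x y : X} {s : ℝ} (hs : s ∈ chainCosts D N x y) : inducedDist D x y ≤ s :=
    inducedDist_le_of_mem hD'tri hle hs
  have hlow (x y : X) : D' x y ≤ inducedDist D x y :=
    le_inducedDist fun _ _ => chainCosts.le_of_mem hD'tri hle
  have hup (x y : X) : inducedDist D x y ≤ D x y := hind (chainCosts.mem_zero.2 rfl)
  have hsymm_le (x y : X) : inducedDist D x y ≤ inducedDist D y x :=
    le_inducedDist fun _ _ hs => hind (chainCosts.symm hsymm hs)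
  refine ⟨fun x y => (hsymm_le x y).antisymm (hsymm_le y x),
    fun x y => (hD'nonneg x y).trans (hlow x y), fun x y => ⟨fun h => ?_, ?_⟩,
    fun x y z => ?_, hup, fun D'' _ _ _ htri hle'' x y =>
      le_inducedDist fun _ _ => chainCosts.le_of_mem htri hle''⟩
  · exact (hD'eq x y).1 (((hlow x y).trans_eq h).antisymm (hD'nonneg x y))
  · rintro rfl
    exact ((hup x x).trans_eq (hzero x)).antisymm ((hD'nonneg x x).trans (hlow x x))
  · rw [← sub_le_iff_le_add]
    refine le_inducedDist fun N s hs => ?_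
    rw [sub_le_comm]
    refine le_inducedDist fun M t ht => ?_
    rw [sub_le_iff_le_add']
    exact hind (chainCosts.add_mem hs ht)
end

section
/- Let C be a Hermitian complex matrix indexed by Fin n × Fin n. The quantum optimal transport cost T_C is a semi-metric on Ω_n — meaning that for all ρ, σ ∈ Ω_n one has T_C(ρ,σ) = T_C(σ,ρ), T_C(ρ,σ) ≥ 0, and T_C(ρ,σ) = 0 if and only if ρ = σ — if and only if C is positive semidefinite and its kernel is exactly the symmetric subspace, i.e., for every vector v : Fin n × Fin n → ℂ, C.mulVec v = 0 if and only if v (i,j) = v (j,i) for all i, j. -/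
open Matrix ComplexOrder

/-- A density matrix: positive semidefinite with trace one. -/
def IsDensityMatrix {k : Type*} [Fintype k] [DecidableEq k] (ρ : Matrix k k ℂ) : Prop :=
  ρ.PosSemidef ∧ ρ.trace = 1

/-- Partial trace over the second factor. -/
noncomputable def trB {m n : ℕ} (R : Matrix (Fin m × Fin n) (Fin m × Fin n) ℂ) :
    Matrix (Fin m) (Fin m) ℂ :=
  Matrix.of fun i j => ∑ p, R (i, p) (j, p)

/-- Partial trace over the first factor. -/
noncomputable def trA {m n : ℕ} (R : Matrix (Fin m × Fin n) (Fin m × Fin n) ℂ) :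
    Matrix (Fin n) (Fin n) ℂ :=
  Matrix.of fun p q => ∑ i, R (i, p) (i, q)

/-- The set of quantum couplings of two density matrices. -/
def QCouplings {m n : ℕ} (ρA : Matrix (Fin m) (Fin m) ℂ) (ρB : Matrix (Fin n) (Fin n) ℂ) :
    Set (Matrix (Fin m × Fin n) (Fin m × Fin n) ℂ) :=
  {R | IsDensityMatrix R ∧ trB R = ρA ∧ trA R = ρB}

/-- The quantum optimal transport cost. -/
noncomputable def QOT {m n : ℕ} (C : Matrix (Fin m × Fin n) (Fin m × Fin n) ℂ)
    (ρA : Matrix (Fin m) (Fin m) ℂ) (ρB : Matrix (Fin n) (Fin n) ℂ) : ℝ :=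
  sInf ((fun R => ((C * R).trace).re) '' QCouplings ρA ρB)

open scoped MatrixOrder Kronecker

section PosSemidef

variable {k : Type*} [Fintype k] [DecidableEq k]

lemma Matrix.PosSemidef.exists_eq_conjTranspose_mul_self {A : Matrix k k ℂ} (hA : A.PosSemidef) :
    ∃ X : Matrix k k ℂ, A = Xᴴ * X := by
  obtain ⟨X, hX⟩ := CStarAlgebra.nonneg_iff_eq_star_mul_self.mp hA.nonneg
  exact ⟨X, hX⟩

omit [DecidableEq k] in
lemma trace_conjTranspose_mul_mul_conjTranspose_mul (X Y : Matrix k k ℂ) :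
    (Xᴴ * X * (Yᴴ * Y)).trace = ((X * Yᴴ)ᴴ * (X * Yᴴ)).trace := by
  rw [← Matrix.mul_assoc, Matrix.trace_mul_comm, conjTranspose_mul, conjTranspose_conjTranspose]
  simp only [Matrix.mul_assoc]

lemma Matrix.PosSemidef.trace_mul_nonneg {A B : Matrix k k ℂ} (hA : A.PosSemidef)
    (hB : B.PosSemidef) : 0 ≤ (A * B).trace := by
  obtain ⟨X, rfl⟩ := hA.exists_eq_conjTranspose_mul_self
  obtain ⟨Y, rfl⟩ := hB.exists_eq_conjTranspose_mul_self
  rw [trace_conjTranspose_mul_mul_conjTranspose_mul]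
  exact (posSemidef_conjTranspose_mul_self _).trace_nonneg

lemma Matrix.PosSemidef.mul_eq_zero_of_trace_mul_eq_zero {A B : Matrix k k ℂ} (hA : A.PosSemidef)
    (hB : B.PosSemidef) (h : (A * B).trace = 0) : A * B = 0 := by
  obtain ⟨X, rfl⟩ := hA.exists_eq_conjTranspose_mul_self
  obtain ⟨Y, rfl⟩ := hB.exists_eq_conjTranspose_mul_self
  rw [trace_conjTranspose_mul_mul_conjTranspose_mul, trace_conjTranspose_mul_self_eq_zero_iff] at h
  rw [Matrix.mul_assoc, ← Matrix.mul_assoc X, h, Matrix.zero_mul, Matrix.mul_zero]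

lemma Matrix.PosSemidef.mul_eq_zero_of_re_trace_mul_eq_zero {A B : Matrix k k ℂ}
    (hA : A.PosSemidef) (hB : B.PosSemidef) (h : (A * B).trace.re = 0) : A * B = 0 :=
  hA.mul_eq_zero_of_trace_mul_eq_zero hB <|
    Complex.ext h (Complex.nonneg_iff.1 (hA.trace_mul_nonneg hB)).2.symm

omit [DecidableEq k] in
lemma Matrix.PosSemidef.re_diag_le_re_trace {A : Matrix k k ℂ} (hA : A.PosSemidef) (i : k) :
    (A i i).re ≤ A.trace.re := by
  rw [Matrix.trace, Complex.re_sum]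
  exact Finset.single_le_sum (f := fun j => (A j j).re)
    (fun j _ => (Complex.nonneg_iff.1 hA.diag_nonneg).1) (Finset.mem_univ i)

lemma Matrix.PosSemidef.norm_apply_le_re_trace {A : Matrix k k ℂ} (hA : A.PosSemidef) (i j : k) :
    ‖A i j‖ ≤ A.trace.re := by
  have hi := hA.re_diag_le_re_trace i
  have hj := hA.re_diag_le_re_trace j
  obtain ⟨X, rfl⟩ := hA.exists_eq_conjTranspose_mul_self
  have hdiag (l : k) : ((Xᴴ * X) l l).re = ∑ p, ‖X p l‖ ^ 2 := by
    simp only [mul_apply, conjTranspose_apply, Complex.re_sum]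
    refine Finset.sum_congr rfl fun p _ => ?_
    rw [← Complex.normSq_eq_norm_sq, Complex.normSq_apply]
    simp
  have hij : ‖(Xᴴ * X) i j‖ ≤ ∑ p, (‖X p i‖ ^ 2 + ‖X p j‖ ^ 2) / 2 := by
    rw [mul_apply]
    refine (norm_sum_le _ _).trans (Finset.sum_le_sum fun p _ => ?_)
    rw [norm_mul, conjTranspose_apply, norm_star]
    nlinarith [sq_nonneg (‖X p i‖ - ‖X p j‖)]
  rw [← Finset.sum_div, Finset.sum_add_distrib, ← hdiag, ← hdiag] at hij
  linarith

omit [DecidableEq k] in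
lemma isClosed_setOf_posSemidef : IsClosed {A : Matrix k k ℂ | A.PosSemidef} := by
  simp only [posSemidef_iff_dotProduct_mulVec, IsHermitian, Set.ofPred_and, Set.ofPred_forall]
  refine (isClosed_eq (by fun_prop) continuous_id).inter (isClosed_iInter fun x => ?_)
  exact isClosed_le continuous_const (by fun_prop)

omit [DecidableEq k] in
lemma trace_mul_vecMulVec_self_star (A : Matrix k k ℂ) (v : k → ℂ) :
    (A * vecMulVec v (star v)).trace = star v ⬝ᵥ A *ᵥ v := by
  rw [mul_vecMulVec, trace_vecMulVec, dotProduct_comm]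

omit [DecidableEq k] in
lemma exists_smul_star_dotProduct_self_eq_one {v : k → ℂ} (hv : v ≠ 0) :
    ∃ c : ℂ, c ≠ 0 ∧ star (c • v) ⬝ᵥ (c • v) = 1 := by
  have h0 : 0 < star v ⬝ᵥ v := dotProduct_star_self_pos_iff.2 hv
  obtain ⟨hre, him⟩ := Complex.pos_iff.1 h0
  set r := (star v ⬝ᵥ v).re
  have hr : star v ⬝ᵥ v = r := Complex.ext rfl (by simpa using him.symm)
  refine ⟨((√r)⁻¹ : ℝ), by simpa using (Real.sqrt_pos.2 hre).ne', ?_⟩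
  rw [star_smul, smul_dotProduct, dotProduct_smul, hr]
  simp only [smul_eq_mul, Complex.star_def, Complex.conj_ofReal, ← Complex.ofReal_mul]
  rw [← Complex.ofReal_one]
  congr 1
  have := Real.mul_self_sqrt hre.le
  have := (Real.sqrt_pos.2 hre).ne'
  field_simp
  nlinarith

lemma isDensityMatrix_vecMulVec_self_star {v : k → ℂ} (hv : star v ⬝ᵥ v = 1) :
    IsDensityMatrix (vecMulVec v (star v)) :=
  ⟨posSemidef_vecMulVec_self_star v, by rw [trace_vecMulVec, dotProduct_comm, hv]⟩

end PosSemidef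

section PartialTrace

variable {m n : ℕ}

lemma trB_eq_sum_submatrix (R : Matrix (Fin m × Fin n) (Fin m × Fin n) ℂ) :
    trB R = ∑ p, R.submatrix (·, p) (·, p) := by
  ext i j
  simp [trB, Matrix.sum_apply]

lemma trA_eq_sum_submatrix (R : Matrix (Fin m × Fin n) (Fin m × Fin n) ℂ) :
    trA R = ∑ i, R.submatrix (i, ·) (i, ·) := by
  ext p q
  simp [trA, Matrix.sum_apply]

lemma IsDensityMatrix.trB {R : Matrix (Fin m × Fin n) (Fin m × Fin n) ℂ}
    (hR : IsDensityMatrix R) : IsDensityMatrix (trB R) := by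
  refine ⟨?_, ?_⟩
  · rw [trB_eq_sum_submatrix]
    exact posSemidef_sum _ fun p _ => hR.1.submatrix _
  · rw [← hR.2]
    simp [Matrix.trace, _root_.trB, Fintype.sum_prod_type]

lemma IsDensityMatrix.trA {R : Matrix (Fin m × Fin n) (Fin m × Fin n) ℂ}
    (hR : IsDensityMatrix R) : IsDensityMatrix (trA R) := by
  refine ⟨?_, ?_⟩
  · rw [trA_eq_sum_submatrix]
    exact posSemidef_sum _ fun p _ => hR.1.submatrix _
  · rw [← hR.2]
    simp [Matrix.trace, _root_.trA, Fintype.sum_prod_type_right]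

lemma trace_mul_kronecker_one (R : Matrix (Fin m × Fin n) (Fin m × Fin n) ℂ)
    (Q : Matrix (Fin m) (Fin m) ℂ) : (R * Q ⊗ₖ (1 : Matrix (Fin n) (Fin n) ℂ)).trace =
      (trB R * Q).trace := by
  simp only [Matrix.trace, diag_apply, mul_apply, kronecker_apply, trB, of_apply,
    Fintype.sum_prod_type, Matrix.one_apply, mul_ite, mul_one, mul_zero, Finset.sum_ite_eq',
    Finset.mem_univ, if_true, Finset.sum_mul]
  exact Finset.sum_congr rfl fun i _ => Finset.sum_comm

lemma trace_mul_one_kronecker (R : Matrix (Fin m × Fin n) (Fin m × Fin n) ℂ)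
    (Q : Matrix (Fin n) (Fin n) ℂ) : (R * (1 : Matrix (Fin m) (Fin m) ℂ) ⊗ₖ Q).trace =
      (trA R * Q).trace := by
  simp only [Matrix.trace, diag_apply, mul_apply, kronecker_apply, trA, of_apply,
    Fintype.sum_prod_type_right, Matrix.one_apply, ite_mul, one_mul, zero_mul, mul_ite, mul_zero,
    Finset.sum_ite_eq', Finset.mem_univ, if_true, Finset.sum_mul]
  exact Finset.sum_congr rfl fun i _ => Finset.sum_comm

lemma isCompact_QCouplings (ρA : Matrix (Fin m) (Fin m) ℂ) (ρB : Matrix (Fin n) (Fin n) ℂ) :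
    IsCompact (QCouplings ρA ρB) := by
  refine (isCompact_univ_pi fun _ => isCompact_univ_pi fun _ =>
    isCompact_closedBall (0 : ℂ) 1).of_isClosed_subset ?_ ?_
  · refine (isClosed_setOf_posSemidef.inter (isClosed_eq (by fun_prop) continuous_const)).inter
      ((isClosed_eq ?_ continuous_const).inter (isClosed_eq ?_ continuous_const))
    · rw [funext trB_eq_sum_submatrix]
      fun_prop
    · rw [funext trA_eq_sum_submatrix]
      fun_prop
  · rintro R ⟨⟨hR, htr⟩, -⟩ a - b -
    simpa [htr] using hR.norm_apply_le_re_trace a b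

lemma kronecker_mem_QCouplings {ρA : Matrix (Fin m) (Fin m) ℂ} {ρB : Matrix (Fin n) (Fin n) ℂ}
    (hA : IsDensityMatrix ρA) (hB : IsDensityMatrix ρB) : ρA ⊗ₖ ρB ∈ QCouplings ρA ρB := by
  refine ⟨⟨hA.1.kronecker hB.1, by rw [trace_kronecker, hA.2, hB.2, one_mul]⟩, ?_, ?_⟩
  · ext i j
    have := hB.2
    simp only [Matrix.trace, diag_apply] at this
    simp [trB, ← Finset.mul_sum, this]
  · ext i j
    have := hA.2
    simp only [Matrix.trace, diag_apply] at this
    simp [trA, ← Finset.sum_mul, this]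

variable (C : Matrix (Fin m × Fin n) (Fin m × Fin n) ℂ)

lemma isCompact_image_QCouplings (ρA : Matrix (Fin m) (Fin m) ℂ)
    (ρB : Matrix (Fin n) (Fin n) ℂ) :
    IsCompact ((fun R => ((C * R).trace).re) '' QCouplings ρA ρB) :=
  (isCompact_QCouplings ρA ρB).image (by fun_prop)

lemma QOT_le {ρA : Matrix (Fin m) (Fin m) ℂ} {ρB : Matrix (Fin n) (Fin n) ℂ}
    {R : Matrix (Fin m × Fin n) (Fin m × Fin n) ℂ} (hR : R ∈ QCouplings ρA ρB) :
    QOT C ρA ρB ≤ ((C * R).trace).re :=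
  csInf_le (isCompact_image_QCouplings C ρA ρB).bddBelow ⟨R, hR, rfl⟩

lemma exists_QOT_eq {ρA : Matrix (Fin m) (Fin m) ℂ} {ρB : Matrix (Fin n) (Fin n) ℂ}
    (hA : IsDensityMatrix ρA) (hB : IsDensityMatrix ρB) :
    ∃ R ∈ QCouplings ρA ρB, ((C * R).trace).re = QOT C ρA ρB :=
  (isCompact_image_QCouplings C ρA ρB).sInf_mem
    (Set.Nonempty.image _ ⟨_, kronecker_mem_QCouplings hA hB⟩)

end PartialTrace

section Symmetric

variable {n : ℕ}

/-- The tensor square of a vector. -/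
def tensorSquare (x : Fin n → ℂ) : Fin n × Fin n → ℂ := fun a => x a.1 * x a.2

lemma star_tensorSquare_dotProduct_self {x : Fin n → ℂ} (hx : star x ⬝ᵥ x = 1) :
    star (tensorSquare x) ⬝ᵥ tensorSquare x = 1 := by
  have h : star (tensorSquare x) ⬝ᵥ tensorSquare x = (star x ⬝ᵥ x) * (star x ⬝ᵥ x) := by
    simp only [dotProduct, Fintype.sum_prod_type, Finset.sum_mul_sum, tensorSquare, Pi.star_apply,
      star_mul']
    exact Finset.sum_congr rfl fun i _ => Finset.sum_congr rfl fun j _ => by ring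
  rw [h, hx, one_mul]

lemma vecMulVec_self_star_kronecker_self (x : Fin n → ℂ) :
    vecMulVec x (star x) ⊗ₖ vecMulVec x (star x) =
      vecMulVec (tensorSquare x) (star (tensorSquare x)) := by
  ext a b
  simp only [kroneckerMap_apply, vecMulVec_apply, tensorSquare, Pi.star_apply, star_mul']
  ring

lemma posSemidef_one_sub_vecMulVec_self_star {x : Fin n → ℂ} (hx : star x ⬝ᵥ x = 1) :
    (1 - vecMulVec x (star x)).PosSemidef := by
  have hP : vecMulVec x (star x) * vecMulVec x (star x) = vecMulVec x (star x) := by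
    rw [vecMulVec_mul_vecMulVec, hx, one_smul]
  have h : 1 - vecMulVec x (star x) =
      (1 - vecMulVec x (star x))ᴴ * (1 - vecMulVec x (star x)) := by
    rw [conjTranspose_sub, conjTranspose_one, conjTranspose_vecMulVec, star_star, sub_mul,
      mul_sub, mul_sub, hP]
    simp
  rw [h]
  exact posSemidef_conjTranspose_mul_self _

/-- A coupling of a pure state with itself is supported on the tensor square of that state. -/
lemma eq_mul_of_mem_QCouplings_pure {x : Fin n → ℂ} (hx : star x ⬝ᵥ x = 1)
    {R : Matrix (Fin n × Fin n) (Fin n × Fin n) ℂ}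
    (hR : R ∈ QCouplings (vecMulVec x (star x)) (vecMulVec x (star x))) :
    R = R * vecMulVec (tensorSquare x) (star (tensorSquare x)) := by
  obtain ⟨⟨hpos, -⟩, hB, hA⟩ := hR
  have hQ := posSemidef_one_sub_vecMulVec_self_star hx
  have hPQ : vecMulVec x (star x) * (1 - vecMulVec x (star x)) = 0 := by
    rw [mul_sub, vecMulVec_mul_vecMulVec, hx, one_smul, mul_one, sub_self]
  have hQl : (1 - vecMulVec x (star x)) ⊗ₖ (1 : Matrix (Fin n) (Fin n) ℂ) =
      1 - vecMulVec x (star x) ⊗ₖ 1 := by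
    rw [eq_sub_iff_add_eq, ← add_kronecker, sub_add_cancel, one_kronecker_one]
  have hQr : (1 : Matrix (Fin n) (Fin n) ℂ) ⊗ₖ (1 - vecMulVec x (star x)) =
      1 - 1 ⊗ₖ vecMulVec x (star x) := by
    rw [eq_sub_iff_add_eq, ← kronecker_add, sub_add_cancel, one_kronecker_one]
  have h1 : R * (vecMulVec x (star x) ⊗ₖ 1) = R := by
    have h := hpos.mul_eq_zero_of_trace_mul_eq_zero (hQ.kronecker PosSemidef.one)
      (by rw [trace_mul_kronecker_one, hB, hPQ, trace_zero])
    rw [hQl, mul_sub, mul_one, sub_eq_zero] at h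
    exact h.symm
  have h2 : R * (1 ⊗ₖ vecMulVec x (star x)) = R := by
    have h := hpos.mul_eq_zero_of_trace_mul_eq_zero (PosSemidef.one.kronecker hQ)
      (by rw [trace_mul_one_kronecker, hA, hPQ, trace_zero])
    rw [hQr, mul_sub, mul_one, sub_eq_zero] at h
    exact h.symm
  rw [← vecMulVec_self_star_kronecker_self]
  nth_rw 1 [← h2, ← h1]
  rw [Matrix.mul_assoc, ← mul_kronecker_mul, Matrix.mul_one, Matrix.one_mul]

lemma mulVec_tensorSquare_eq_zero_of_mul_eq_zero {C : Matrix (Fin n × Fin n) (Fin n × Fin n) ℂ}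
    {x : Fin n → ℂ} (hx : star x ⬝ᵥ x = 1) {R : Matrix (Fin n × Fin n) (Fin n × Fin n) ℂ}
    (hR : R ∈ QCouplings (vecMulVec x (star x)) (vecMulVec x (star x))) (hCR : C * R = 0) :
    C *ᵥ tensorSquare x = 0 := by
  have hRW := eq_mul_of_mem_QCouplings_pure hx hR
  set w := tensorSquare x
  have htr : star w ⬝ᵥ R *ᵥ w = 1 := by
    rw [← trace_mul_vecMulVec_self_star, ← hRW, hR.1.2]
  have hWR : R = vecMulVec w (star w) * R := by
    have h := congrArg conjTranspose hRW
    rwa [conjTranspose_mul, hR.1.1.isHermitian.eq,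
      (posSemidef_vecMulVec_self_star w).isHermitian.eq] at h
  have hRw : R *ᵥ w = w := by
    conv_lhs => rw [hWR, ← mulVec_mulVec, vecMulVec_mulVec, htr]
    simp
  rw [← hRw, mulVec_mulVec, hCR, zero_mulVec]

lemma mulVec_eq_zero_of_symmetric {C : Matrix (Fin n × Fin n) (Fin n × Fin n) ℂ}
    (hC : ∀ x : Fin n → ℂ, C *ᵥ tensorSquare x = 0) {v : Fin n × Fin n → ℂ}
    (hv : ∀ i j, v (i, j) = v (j, i)) : C *ᵥ v = 0 := by
  have hanti (a : Fin n × Fin n) (i j : Fin n) : C a (i, j) + C a (j, i) = 0 := by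
    have hij : (Pi.single (i, j) 1 + Pi.single (j, i) 1 : Fin n × Fin n → ℂ) =
        tensorSquare (Pi.single i 1 + Pi.single j 1) - tensorSquare (Pi.single i 1)
          - tensorSquare (Pi.single j 1) := by
      ext ⟨p, q⟩
      simp only [tensorSquare, Pi.add_apply, Pi.sub_apply, Pi.single_apply, Prod.mk.injEq,
        ite_and]
      split_ifs <;> ring
    have h := congrArg (C *ᵥ ·) hij
    simp only [mulVec_sub, hC, mulVec_add, mulVec_single_one, sub_zero] at h
    simpa using congrFun h a
  ext a
  have hsum : ∑ b, C a b * v b = -∑ b, C a b * v b := by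
    conv_lhs => rw [← Equiv.sum_comp (Equiv.prodComm (Fin n) (Fin n))]
    rw [← Finset.sum_neg_distrib]
    refine Finset.sum_congr rfl fun ⟨i, j⟩ _ => ?_
    simp only [Equiv.prodComm_apply, Prod.swap_prod_mk]
    rw [hv j i, eq_neg_of_add_eq_zero_right (hanti a i j)]
    ring
  exact self_eq_neg.1 hsum

lemma symmetric_of_forall_partialTrace_eq {v : Fin n × Fin n → ℂ}
    (h : ∀ c : ℂ, trB (vecMulVec (v + fun a => if a.1 = a.2 then c else 0)
        (star (v + fun a => if a.1 = a.2 then c else 0))) =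
      trA (vecMulVec (v + fun a => if a.1 = a.2 then c else 0)
        (star (v + fun a => if a.1 = a.2 then c else 0)))) (i j : Fin n) :
    v (i, j) = v (j, i) := by
  have key (c : ℂ) := congrFun (congrFun (h c) i) j
  simp only [trB, trA, of_apply, vecMulVec_apply, Pi.add_apply, Pi.star_apply, star_add,
    mul_add, add_mul, Finset.sum_add_distrib, apply_ite (star : ℂ → ℂ), star_zero, ite_mul,
    mul_ite, zero_mul, mul_zero, Finset.sum_ite_eq, Finset.sum_ite_eq', Finset.mem_univ,
    if_true] at key
  have h0 := key 0
  have h1 := key 1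
  have hI := key Complex.I
  simp only [star_zero, star_one, Complex.star_def, Complex.conj_I, mul_zero, zero_mul,
    mul_one, one_mul, ite_self, add_zero, eq_comm (a := j) (b := i)] at h0 h1 hI
  linear_combination (h1 - h0) / 2 + Complex.I / 2 * (hI - h0) +
    (v (i, j) - v (j, i) - starRingEnd ℂ (v (j, i)) + starRingEnd ℂ (v (i, j))) / 2 * Complex.I_sq

lemma exists_coupling_mulVec_symmetric {ρ : Matrix (Fin n) (Fin n) ℂ} (hρ : IsDensityMatrix ρ)
    {C : Matrix (Fin n × Fin n) (Fin n × Fin n) ℂ}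
    (hC : ∀ x : Fin n → ℂ, C *ᵥ tensorSquare x = 0) :
    ∃ R ∈ QCouplings ρ ρ, C * R = 0 := by
  have hH := hρ.1.isHermitian
  let y (k : Fin n) : Fin n → ℂ := hH.eigenvectorBasis k
  have hy (k : Fin n) : ∑ p, y k p * star (y k p) = 1 := by
    have h := hH.eigenvectorBasis.orthonormal.1 k
    have h2 := inner_self_eq_norm_sq_to_K (𝕜 := ℂ) (hH.eigenvectorBasis k)
    rw [h, EuclideanSpace.inner_eq_star_dotProduct] at h2
    simpa [dotProduct] using h2
  have hspec (i j : Fin n) : ∑ k, (hH.eigenvalues k : ℂ) * (y k i * star (y k j)) = ρ i j := by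
    conv_rhs => rw [hH.spectral_theorem, Unitary.conjStarAlgAut_apply, mul_apply]
    refine Finset.sum_congr rfl fun k _ => ?_
    rw [mul_diagonal]
    simp [y]
    ring
  let R : Matrix (Fin n × Fin n) (Fin n × Fin n) ℂ := ∑ k, (hH.eigenvalues k : ℂ) •
    vecMulVec (tensorSquare (y k)) (star (tensorSquare (y k)))
  have hRpos : R.PosSemidef := posSemidef_sum _ fun k _ =>
    (posSemidef_vecMulVec_self_star _).smul (by exact_mod_cast hρ.1.eigenvalues_nonneg k)
  have hRB : trB R = ρ := by
    ext i j
    rw [← hspec]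
    simp only [trB, R, of_apply, Matrix.sum_apply, Matrix.smul_apply, vecMulVec_apply,
      tensorSquare, Pi.star_apply, star_mul', smul_eq_mul]
    rw [Finset.sum_comm]
    refine Finset.sum_congr rfl fun k _ => ?_
    rw [← mul_one (_ * (_ * _)), ← hy k, Finset.mul_sum]
    exact Finset.sum_congr rfl fun p _ => by ring
  have hRA : trA R = ρ := by
    ext i j
    rw [← hspec]
    simp only [trA, R, of_apply, Matrix.sum_apply, Matrix.smul_apply, vecMulVec_apply,
      tensorSquare, Pi.star_apply, star_mul', smul_eq_mul]
    rw [Finset.sum_comm]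
    refine Finset.sum_congr rfl fun k _ => ?_
    rw [← mul_one (_ * (_ * _)), ← hy k, Finset.mul_sum]
    exact Finset.sum_congr rfl fun p _ => by ring
  refine ⟨R, ⟨⟨hRpos, ?_⟩, hRB, hRA⟩, ?_⟩
  · rw [← hρ.2, ← hRB]
    simp [Matrix.trace, trB, Fintype.sum_prod_type]
  · simp only [R, Matrix.mul_sum, Matrix.mul_smul, mul_vecMulVec, hC, zero_vecMulVec, smul_zero,
      Finset.sum_const_zero]

lemma QOT_swap_le {C : Matrix (Fin n × Fin n) (Fin n × Fin n) ℂ}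
    (hC : C.submatrix Prod.swap Prod.swap = C) {ρ σ : Matrix (Fin n) (Fin n) ℂ}
    (hρ : IsDensityMatrix ρ) (hσ : IsDensityMatrix σ) : QOT C σ ρ ≤ QOT C ρ σ := by
  obtain ⟨R, ⟨⟨hpos, htr⟩, hB, hA⟩, hR⟩ := exists_QOT_eq C hρ hσ
  have htrace (M : Matrix (Fin n × Fin n) (Fin n × Fin n) ℂ) :
      (M.submatrix Prod.swap Prod.swap).trace = M.trace :=
    Equiv.sum_comp (Equiv.prodComm (Fin n) (Fin n)) fun a => M a a
  have hmem : R.submatrix Prod.swap Prod.swap ∈ QCouplings σ ρ :=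
    ⟨⟨hpos.submatrix _, (htrace R).trans htr⟩, hA, hB⟩
  refine (QOT_le C hmem).trans_eq ?_
  rw [← hR, ← htrace (C * R), ← submatrix_mul_equiv C R Prod.swap (Equiv.prodComm _ _) Prod.swap]
  conv_lhs => rw [← hC]
  rfl

lemma submatrix_swap_eq_self {C : Matrix (Fin n × Fin n) (Fin n × Fin n) ℂ} (hC : C.IsHermitian)
    (hker : ∀ v : Fin n × Fin n → ℂ, (∀ i j, v (i, j) = v (j, i)) → C *ᵥ v = 0) :
    C.submatrix Prod.swap Prod.swap = C := by
  have hanti (a b : Fin n × Fin n) : C a b.swap = -C a b := by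
    have h := hker (Pi.single b 1 + Pi.single b.swap 1) fun i j => by
      obtain ⟨p, q⟩ := b
      simp only [Pi.add_apply, Pi.single_apply, Prod.mk.injEq, Prod.swap_prod_mk]
      rw [add_comm]
      congr 1 <;> simp only [and_comm]
    rw [mulVec_add, mulVec_single_one, mulVec_single_one] at h
    exact eq_neg_of_add_eq_zero_right (congrFun h a)
  ext a b
  rw [submatrix_apply, hanti, ← hC.apply, hanti, star_neg, neg_neg, hC.apply]

lemma partialTrace_eq_of_mul_eq_zero {C R : Matrix (Fin n × Fin n) (Fin n × Fin n) ℂ}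
    (hker : ∀ v : Fin n × Fin n → ℂ, C *ᵥ v = 0 → ∀ i j, v (i, j) = v (j, i))
    (hR : R.IsHermitian) (hCR : C * R = 0) : trB R = trA R := by
  have hcol (i j : Fin n) (b : Fin n × Fin n) : R (i, j) b = R (j, i) b :=
    hker (R.col b) (funext fun a => congrFun (congrFun hCR a) b) i j
  have hrow (a : Fin n × Fin n) (i j : Fin n) : R a (i, j) = R a (j, i) := by
    rw [← hR.apply, hcol, hR.apply]
  ext i j
  simp only [trB, trA, of_apply]
  exact Finset.sum_congr rfl fun p _ => (hcol i p _).trans (hrow _ j p)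

end Symmetric

/-- `T_C` is a semi-metric on density matrices iff `C` is positive
semidefinite and its kernel is exactly the symmetric subspace. -/
theorem qot_semimetric_iff (n : ℕ)
    (C : Matrix (Fin n × Fin n) (Fin n × Fin n) ℂ) (hC : C.IsHermitian) :
    (∀ ρ σ : Matrix (Fin n) (Fin n) ℂ, IsDensityMatrix ρ → IsDensityMatrix σ →
        QOT C ρ σ = QOT C σ ρ ∧ 0 ≤ QOT C ρ σ ∧ (QOT C ρ σ = 0 ↔ ρ = σ)) ↔
      (C.PosSemidef ∧
        ∀ v : (Fin n × Fin n) → ℂ, C.mulVec v = 0 ↔ ∀ i j, v (i, j) = v (j, i)) := by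
  constructor
  · intro h
    have hle {u : Fin n × Fin n → ℂ} (hu : star u ⬝ᵥ u = 1) :
        QOT C (trB (vecMulVec u (star u))) (trA (vecMulVec u (star u))) ≤
          (star u ⬝ᵥ C *ᵥ u).re := by
      rw [← trace_mul_vecMulVec_self_star]
      exact QOT_le C ⟨isDensityMatrix_vecMulVec_self_star hu, rfl, rfl⟩
    have hpos : C.PosSemidef := by
      refine .of_dotProduct_mulVec_nonneg hC fun v => ?_
      rcases eq_or_ne v 0 with rfl | hv
      · simp
      obtain ⟨c, hc, hu⟩ := exists_smul_star_dotProduct_self_eq_one hv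
      have hd := isDensityMatrix_vecMulVec_self_star hu
      have h1 := (h _ _ hd.trB hd.trA).2.1.trans (hle hu)
      refine Complex.nonneg_iff.2 ⟨?_, (hC.im_star_dotProduct_mulVec_self v).symm⟩
      rw [mulVec_smul, star_smul, smul_dotProduct, dotProduct_smul, smul_eq_mul, smul_eq_mul,
        ← mul_assoc, Complex.star_def, ← Complex.normSq_eq_conj_mul_self, Complex.re_ofReal_mul]
        at h1
      exact nonneg_of_mul_nonneg_right h1 (Complex.normSq_pos.2 hc)
    have hsq (x : Fin n → ℂ) : C *ᵥ tensorSquare x = 0 := by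
      rcases eq_or_ne x 0 with rfl | hx
      · have : tensorSquare (0 : Fin n → ℂ) = 0 := by ext; simp [tensorSquare]
        rw [this, mulVec_zero]
      obtain ⟨c, hc, hu⟩ := exists_smul_star_dotProduct_self_eq_one hx
      have hd := isDensityMatrix_vecMulVec_self_star hu
      obtain ⟨R, hR, hR0⟩ := exists_QOT_eq C hd hd
      rw [(h _ _ hd hd).2.2.2 rfl] at hR0
      have h0 := mulVec_tensorSquare_eq_zero_of_mul_eq_zero hu hR
        (hpos.mul_eq_zero_of_re_trace_mul_eq_zero hR.1.1 hR0)
      have hcx : tensorSquare (c • x) = (c * c) • tensorSquare x := by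
        ext a
        simp only [tensorSquare, Pi.smul_apply, smul_eq_mul]
        ring
      rw [hcx, mulVec_smul] at h0
      exact (smul_eq_zero.1 h0).resolve_left (mul_ne_zero hc hc)
    have hmarg (v : Fin n × Fin n → ℂ) (hv : C *ᵥ v = 0) :
        trB (vecMulVec v (star v)) = trA (vecMulVec v (star v)) := by
      rcases eq_or_ne v 0 with rfl | hv0
      · ext i j
        simp [trA, trB]
      obtain ⟨c, hc, hu⟩ := exists_smul_star_dotProduct_self_eq_one hv0
      have hd := isDensityMatrix_vecMulVec_self_star hu
      have h1 := hle hu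
      rw [mulVec_smul, hv, smul_zero, dotProduct_zero, Complex.zero_re] at h1
      have h2 := (h _ _ hd.trB hd.trA).2.2.1 (h1.antisymm (h _ _ hd.trB hd.trA).2.1)
      rw [star_smul, smul_vecMulVec, vecMulVec_smul, smul_smul, trB_eq_sum_submatrix,
        trA_eq_sum_submatrix] at h2
      simp only [submatrix_smul, Pi.smul_apply, ← Finset.smul_sum] at h2
      rw [trB_eq_sum_submatrix, trA_eq_sum_submatrix]
      exact smul_right_injective _ (mul_ne_zero hc (star_ne_zero.2 hc)) h2
    refine ⟨hpos, fun v => ⟨fun hv => ?_, mulVec_eq_zero_of_symmetric hsq⟩⟩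
    refine symmetric_of_forall_partialTrace_eq fun c => hmarg _ ?_
    rw [mulVec_add, hv, zero_add]
    exact mulVec_eq_zero_of_symmetric hsq fun i j => by simp only [eq_comm]
  · rintro ⟨hpos, hker⟩ ρ σ hρ hσ
    have hswap := submatrix_swap_eq_self hC fun v => (hker v).2
    obtain ⟨R, hR, hR0⟩ := exists_QOT_eq C hρ hσ
    have hnonneg : 0 ≤ QOT C ρ σ := by
      rw [← hR0]
      exact (Complex.nonneg_iff.1 (hpos.trace_mul_nonneg hR.1.1)).1
    refine ⟨(QOT_swap_le hswap hσ hρ).antisymm (QOT_swap_le hswap hρ hσ), hnonneg,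
      fun h0 => ?_, ?_⟩
    · rw [h0] at hR0
      rw [← hR.2.1, ← hR.2.2]
      exact partialTrace_eq_of_mul_eq_zero (fun v => (hker v).1) hR.1.1.isHermitian
        (hpos.mul_eq_zero_of_re_trace_mul_eq_zero hR.1.1 hR0)
    · rintro rfl
      obtain ⟨S, hS, hCS⟩ := exists_coupling_mulVec_symmetric (C := C) hρ fun x =>
        (hker _).2 fun i j => mul_comm _ _
      refine le_antisymm ((QOT_le C hS).trans_eq ?_) hnonneg
      rw [hCS, trace_zero, Complex.zero_re]
end

section
/- For all qubit density matrices ρA, ρB ∈ Ω_2, the quantum optimal transport cost with cost matrix C^Q is given by T_{C^Q}(ρA, ρB) = (1/2) · sup over unitary 2×2 complex matrices U of ( √(Re((Uᴴ * ρA * U) 0 0)) − √(Re((Uᴴ * ρB * U) 0 0)) )², where (·) 0 0 denotes the first diagonal entry (the supremum is attained by compactness of the unitary group). -/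
open Matrix ComplexOrder

/-- The SWAP matrix on `Fin n × Fin n`. -/
noncomputable def swapM (n : ℕ) : Matrix (Fin n × Fin n) (Fin n × Fin n) ℂ :=
  Matrix.of fun x y => if x.1 = y.2 ∧ x.2 = y.1 then 1 else 0

/-- The quantum cost matrix `C^Q = (1/2) (I - S)`. -/
noncomputable def CQ (n : ℕ) : Matrix (Fin n × Fin n) (Fin n × Fin n) ℂ :=
  (1 / 2 : ℂ) • (1 - swapM n)

/-- Kronecker product of square matrices indexed by `Fin m` and `Fin n`. -/
noncomputable def kron {m n : ℕ} (A : Matrix (Fin m) (Fin m) ℂ)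
    (B : Matrix (Fin n) (Fin n) ℂ) : Matrix (Fin m × Fin n) (Fin m × Fin n) ℂ :=
  Matrix.of fun x y => A x.1 y.1 * B x.2 y.2

/-- The value at `(x, y)` of the Hermitian form with diagonal `(r ^ 2, 1 - r ^ 2)` and upper
off-diagonal entry `γ`. -/
noncomputable def qubitForm (r : ℝ) (γ x y : ℂ) : ℝ :=
  r ^ 2 * Complex.normSq x + (1 - r ^ 2) * Complex.normSq y + 2 * (star x * y * γ).re

/-- A pair of qubit states whose difference of square roots is extremal at the first basis vector
has proportional off-diagonal entries, small enough for a coupling supported on three basis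
vectors. -/
theorem exists_optimal_offdiagonal {s t : ℝ} {α β : ℂ} (ht : 0 ≤ t) (hst : t < s)
    (hα : Complex.normSq α ≤ s ^ 2 * (1 - s ^ 2)) (hβ : Complex.normSq β ≤ t ^ 2 * (1 - t ^ 2))
    (hQα : ∀ x y, 0 ≤ qubitForm s α x y) (hQβ : ∀ x y, 0 ≤ qubitForm t β x y)
    (hmax : ∀ x y, |√(qubitForm s α x y) - √(qubitForm t β x y)| ≤
      (s - t) * √(Complex.normSq x + Complex.normSq y)) :
    ∃ c : ℂ, α = s * c ∧ β = t * c ∧ s ^ 2 + t ^ 2 + Complex.normSq c ≤ 1 := by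
  have hs : 0 < s := ht.trans_lt hst
  have hsC : (s : ℂ) ≠ 0 := by exact_mod_cast hs.ne'
  have hc : α = s * (α / s) := by field_simp
  have hnc : Complex.normSq α = s ^ 2 * Complex.normSq (α / s) := by
    conv_lhs => rw [hc]
    rw [Complex.normSq_mul, Complex.normSq_ofReal]; ring
  rcases ht.eq_or_lt with rfl | htpos
  · have hβ0 : β = 0 := by
      rw [← Complex.normSq_eq_zero]
      exact le_antisymm (by simpa using hβ) (Complex.normSq_nonneg _)
    refine ⟨α / s, hc, by simp [hβ0], ?_⟩
    have := le_of_mul_le_mul_left (hnc ▸ hα) (by positivity)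
    linarith
  · have hlin : ∀ x y, qubitForm s α x y ≤ s / t * qubitForm t β x y +
        s * (s - t) * (Complex.normSq x + Complex.normSq y) := by
      intro x y
      have h1 := (abs_le.1 (hmax x y)).2
      have hN : 0 ≤ Complex.normSq x + Complex.normSq y :=
        add_nonneg (Complex.normSq_nonneg _) (Complex.normSq_nonneg _)
      have e1 := Real.sq_sqrt (hQα x y)
      have e2 := Real.sq_sqrt (hQβ x y)
      have e3 := Real.sq_sqrt hN
      have p1 := Real.sqrt_nonneg (qubitForm s α x y)
      have p2 := Real.sqrt_nonneg (qubitForm t β x y)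
      have p3 := Real.sqrt_nonneg (Complex.normSq x + Complex.normSq y)
      generalize √(qubitForm s α x y) = a at *
      generalize √(qubitForm t β x y) = b at *
      generalize √(Complex.normSq x + Complex.normSq y) = n at *
      rw [← e1, ← e2, ← e3]
      have h2 : a ≤ b + (s - t) * n := by linarith
      have h3 : a ^ 2 ≤ (b + (s - t) * n) ^ 2 := pow_le_pow_left₀ p1 h2 2
      have h4 : s / t * b ^ 2 + s * (s - t) * n ^ 2 - (b + (s - t) * n) ^ 2
          = (s - t) / t * (b - t * n) ^ 2 := by field_simp; ring
      have h5 : 0 ≤ (s - t) / t * (b - t * n) ^ 2 :=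
        mul_nonneg (div_nonneg (by linarith) ht) (sq_nonneg _)
      linarith
    have hδ : α - s / t * β = 0 := by
      by_contra hne
      set δ : ℂ := α - s / t * β with hδdef
      have hpos : 0 < Complex.normSq δ := Complex.normSq_pos.2 hne
      obtain ⟨K, hK⟩ : ∃ K : ℝ, ∀ y, 2 * (y * δ).re ≤ K * Complex.normSq y := by
        refine ⟨s / t * (1 - t ^ 2) + s * (s - t) - (1 - s ^ 2), fun y => ?_⟩
        have h := hlin 1 y
        simp only [qubitForm] at h
        have h6 : (y * δ).re = (y * α).re - s / t * (y * β).re := by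
          rw [hδdef, mul_sub, Complex.sub_re,
            show y * ((s : ℂ) / t * β) = ((s / t : ℝ) : ℂ) * (y * β) by push_cast; ring,
            Complex.re_ofReal_mul]
        have h7 : s / t * t ^ 2 = s * t := by field_simp
        simp only [map_one, star_one, one_mul, mul_one] at h
        rw [h6]
        linear_combination h + h7
      have hε : ∀ ε : ℝ, 0 < ε → 2 ≤ K * ε := by
        intro ε hε
        have h := hK (ε * star δ)
        have h8 : ((ε : ℂ) * star δ * δ).re = ε * Complex.normSq δ := by
          rw [mul_assoc, Complex.re_ofReal_mul]
          congr 1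
          simp [Complex.normSq_apply]
        have h9 : Complex.normSq ((ε : ℂ) * star δ) = ε ^ 2 * Complex.normSq δ := by
          rw [Complex.normSq_mul, Complex.normSq_ofReal]
          simp [Complex.normSq_conj, sq]
        rw [h8, h9] at h
        have : (2 - K * ε) * (ε * Complex.normSq δ) ≤ 0 := by linarith
        by_contra! hlt
        have : 0 < (2 - K * ε) * (ε * Complex.normSq δ) := by
          apply mul_pos (by linarith) (by positivity)
        linarith
      have h1 := hε (1 / (|K| + 1)) (by positivity)
      have h2 : K * (1 / (|K| + 1)) ≤ 1 := by
        rw [mul_one_div, div_le_one (by positivity)]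
        linarith [le_abs_self K]
      linarith
    have htC : (t : ℂ) ≠ 0 := by exact_mod_cast htpos.ne'
    have hβc : β = t * (α / s) := by
      rw [sub_eq_zero.1 hδ]; field_simp
    refine ⟨α / s, hc, hβc, ?_⟩
    generalize α / s = c at *
    by_contra! hw
    have hm := (abs_le.1 (hmax c (-((s + t : ℝ) : ℂ)))).1
    have hr : ∀ r : ℝ, (star c * (-((s + t : ℝ) : ℂ)) * (r * c)).re
        = -(s + t) * r * Complex.normSq c := by
      intro r
      rw [show star c * (-((s + t : ℝ) : ℂ)) * (r * c)
        = ((-(s + t) * r : ℝ) : ℂ) * (star c * c) by push_cast; ring, Complex.re_ofReal_mul]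
      congr 1
      simp [Complex.normSq_apply]
    have hy : Complex.normSq (-((s + t : ℝ) : ℂ)) = (s + t) ^ 2 := by
      rw [Complex.normSq_neg, Complex.normSq_ofReal, sq]
    have e1 := Real.sq_sqrt (hQα c (-((s + t : ℝ) : ℂ)))
    have e2 := Real.sq_sqrt (hQβ c (-((s + t : ℝ) : ℂ)))
    have e3 := Real.sq_sqrt (add_nonneg (Complex.normSq_nonneg c)
      (Complex.normSq_nonneg (-((s + t : ℝ) : ℂ))))
    have p1 := Real.sqrt_nonneg (qubitForm s α c (-((s + t : ℝ) : ℂ)))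
    have p2 := Real.sqrt_nonneg (qubitForm t β c (-((s + t : ℝ) : ℂ)))
    have p3 := Real.sqrt_nonneg (Complex.normSq c + Complex.normSq (-((s + t : ℝ) : ℂ)))
    generalize √(qubitForm s α c (-((s + t : ℝ) : ℂ))) = a at *
    generalize √(qubitForm t β c (-((s + t : ℝ) : ℂ))) = b at *
    generalize √(Complex.normSq c + Complex.normSq (-((s + t : ℝ) : ℂ))) = n at *
    rw [qubitForm, hy, hc, hr] at e1
    rw [qubitForm, hy, hβc, hr] at e2
    rw [hy] at e3
    have hd : 0 < (s ^ 2 + t ^ 2 + Complex.normSq c - 1) * (s + t) ^ 2 :=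
      mul_pos (by linarith) (by positivity)
    have ha : a < t * n := by
      apply lt_of_pow_lt_pow_left₀ 2 (by positivity)
      rw [mul_pow, e1, e3]; linarith
    have hb : b < s * n := by
      apply lt_of_pow_lt_pow_left₀ 2 (by positivity)
      rw [mul_pow, e2, e3]; linarith
    have hdiff : (b - a) * (b + a) = (s - t) * n * ((s + t) * n) := by
      have : (b - a) * (b + a) = b ^ 2 - a ^ 2 := by ring
      rw [this, show (s - t) * n * ((s + t) * n) = (s ^ 2 - t ^ 2) * n ^ 2 by ring, e1, e2, e3]
      ring
    have hn : 0 < n := by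
      by_contra! h
      have : n = 0 := le_antisymm h p3
      subst this
      linarith
    have h1 : (b - a) * (b + a) ≤ (s - t) * n * (b + a) :=
      mul_le_mul_of_nonneg_right (by linarith) (by linarith)
    have h2 : (s - t) * n * (b + a) < (s - t) * n * ((s + t) * n) :=
      mul_lt_mul_of_pos_left (by linarith) (mul_pos (by linarith) hn)
    linarith

section Density

variable {A : Matrix (Fin 2) (Fin 2) ℂ}

theorem IsDensityMatrix.apply_zero_zero (hA : IsDensityMatrix A) :
    A 0 0 = ((√(A 0 0).re ^ 2 : ℝ) : ℂ) := by
  have h := Complex.le_def.1 (hA.1.diag_nonneg (i := 0))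
  rw [Real.sq_sqrt h.1]
  exact Complex.ext rfl (by simpa using h.2.symm)

theorem IsDensityMatrix.apply_one_one (hA : IsDensityMatrix A) :
    A 1 1 = ((1 - √(A 0 0).re ^ 2 : ℝ) : ℂ) := by
  have h := hA.2
  rw [Matrix.trace_fin_two, hA.apply_zero_zero] at h
  push_cast at h ⊢
  linear_combination h

theorem IsDensityMatrix.apply_one_zero (hA : IsDensityMatrix A) : A 1 0 = star (A 0 1) :=
  (hA.1.isHermitian.apply 1 0).symm

theorem IsDensityMatrix.normSq_le (hA : IsDensityMatrix A) :
    Complex.normSq (A 0 1) ≤ √(A 0 0).re ^ 2 * (1 - √(A 0 0).re ^ 2) := by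
  have h := (Complex.le_def.1 hA.1.det_nonneg).1
  rw [Matrix.det_fin_two, hA.apply_one_one, hA.apply_zero_zero, hA.apply_one_zero,
    ← Complex.ofReal_mul, Complex.star_def, Complex.mul_conj, ← Complex.ofReal_sub,
    Complex.ofReal_re, Complex.zero_re, ← hA.apply_zero_zero] at h
  linarith

theorem IsDensityMatrix.conj (hA : IsDensityMatrix A) {U : Matrix (Fin 2) (Fin 2) ℂ}
    (hU : Uᴴ * U = 1) : IsDensityMatrix (Uᴴ * A * U) := by
  refine ⟨hA.1.conjTranspose_mul_mul_same U, ?_⟩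
  rw [Matrix.trace_mul_cycle, mul_eq_one_comm.1 hU, Matrix.one_mul, hA.2]

theorem IsDensityMatrix.conj_apply_zero_zero_re (hA : IsDensityMatrix A)
    (V : Matrix (Fin 2) (Fin 2) ℂ) :
    ((Vᴴ * A * V) 0 0).re = qubitForm √(A 0 0).re (A 0 1) (V 0 0) (V 1 0) := by
  have h : √(A 0 0).re ^ 2 = (A 0 0).re :=
    Real.sq_sqrt (Complex.le_def.1 (hA.1.diag_nonneg (i := 0))).1
  have him : (A 0 0).im = 0 := (Complex.le_def.1 (hA.1.diag_nonneg (i := 0))).2.symm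
  simp only [Matrix.mul_apply, Fin.sum_univ_two, Matrix.conjTranspose_apply, qubitForm]
  rw [hA.apply_one_zero, hA.apply_one_one, h]
  simp [Complex.normSq_apply, him]
  ring

theorem IsDensityMatrix.qubitForm_nonneg (hA : IsDensityMatrix A) (x y : ℂ) :
    0 ≤ qubitForm √(A 0 0).re (A 0 1) x y := by
  have h := hA.conj_apply_zero_zero_re !![x, 0; y, 0]
  simp only [Matrix.of_apply, Matrix.cons_val', Matrix.cons_val_zero, Matrix.cons_val_one] at h
  rw [← h]
  exact (Complex.le_def.1 (hA.1.conjTranspose_mul_mul_same _).diag_nonneg).1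

end Density

theorem qubitForm_smul (r : ℝ) (γ : ℂ) (n : ℝ) (x y : ℂ) :
    qubitForm r γ (n * x) (n * y) = n ^ 2 * qubitForm r γ x y := by
  simp [qubitForm, Complex.normSq_apply]
  ring

theorem conjTranspose_mul_self_of_unit {a b : ℂ} (h : star a * a + star b * b = 1) :
    (!![a, -star b; b, star a])ᴴ * !![a, -star b; b, star a] = 1 := by
  simp only [Complex.star_def] at h
  ext i j
  fin_cases i <;> fin_cases j <;> simp [Matrix.mul_apply, Fin.sum_univ_two]
  · exact h
  · ring
  · ring
  · linear_combination h

/-- An extremality bound over unitaries, extended homogeneously to all vectors. -/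
theorem abs_sqrt_qubitForm_sub_le {A B : Matrix (Fin 2) (Fin 2) ℂ} (hA : IsDensityMatrix A)
    (hB : IsDensityMatrix B) {d : ℝ}
    (h : ∀ V : Matrix (Fin 2) (Fin 2) ℂ, Vᴴ * V = 1 →
      |√((Vᴴ * A * V) 0 0).re - √((Vᴴ * B * V) 0 0).re| ≤ d) (x y : ℂ) :
    |√(qubitForm √(A 0 0).re (A 0 1) x y) - √(qubitForm √(B 0 0).re (B 0 1) x y)| ≤
      d * √(Complex.normSq x + Complex.normSq y) := by
  set n := √(Complex.normSq x + Complex.normSq y) with hn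
  have hN : 0 ≤ Complex.normSq x + Complex.normSq y :=
    add_nonneg (Complex.normSq_nonneg _) (Complex.normSq_nonneg _)
  have hn0 : 0 ≤ n := Real.sqrt_nonneg _
  have hn2 : n ^ 2 = Complex.normSq x + Complex.normSq y := Real.sq_sqrt hN
  rcases hn0.eq_or_lt with h0 | hpos
  · have hx : x = 0 := Complex.normSq_eq_zero.1 (by
      nlinarith [Complex.normSq_nonneg x, Complex.normSq_nonneg y])
    have hy : y = 0 := Complex.normSq_eq_zero.1 (by
      nlinarith [Complex.normSq_nonneg x, Complex.normSq_nonneg y])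
    simp [hx, hy, qubitForm, ← h0]
  · have hnC : (n : ℂ) ≠ 0 := by exact_mod_cast hpos.ne'
    have key : star (x / n) * (x / n) + star (y / n) * (y / n) = 1 := by
      have : (n : ℂ) ^ 2 = star x * x + star y * y := by
        simp only [Complex.star_def, ← Complex.normSq_eq_conj_mul_self]
        exact_mod_cast hn2
      simp only [star_div₀, Complex.star_def, Complex.conj_ofReal] at this ⊢
      field_simp
      linear_combination -this
    have hV := h _ (conjTranspose_mul_self_of_unit key)
    rw [hA.conj_apply_zero_zero_re, hB.conj_apply_zero_zero_re] at hV
    simp only [Matrix.of_apply, Matrix.cons_val', Matrix.cons_val_zero, Matrix.cons_val_one] at hV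
    have hscale (r : ℝ) (γ : ℂ) :
        √(qubitForm r γ x y) = n * √(qubitForm r γ (x / n) (y / n)) := by
      conv_lhs => rw [show x = n * (x / n) by field_simp, show y = n * (y / n) by field_simp]
      rw [qubitForm_smul, Real.sqrt_mul (sq_nonneg _), Real.sqrt_sq hn0]
    rw [hscale, hscale, ← mul_sub, abs_mul, abs_of_nonneg hn0, mul_comm]
    exact mul_le_mul_of_nonneg_right hV hn0

theorem CQ_cost (R : Matrix (Fin 2 × Fin 2) (Fin 2 × Fin 2) ℂ) :
    (CQ 2 * R).trace =
      1 / 2 * (R (0, 1) (0, 1) + R (1, 0) (1, 0) - R (0, 1) (1, 0) - R (1, 0) (0, 1)) := by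
  simp [CQ, swapM, Matrix.trace, Matrix.mul_apply, Fintype.sum_prod_type, Fin.sum_univ_two,
    Matrix.one_apply]
  ring

/-- The first-diagonal-entry functional bounds the transport cost from below. -/
theorem half_sq_sqrt_sub_le_cost {A B : Matrix (Fin 2) (Fin 2) ℂ}
    {R : Matrix (Fin 2 × Fin 2) (Fin 2 × Fin 2) ℂ} (hR : R ∈ QCouplings A B) :
    1 / 2 * (√(A 0 0).re - √(B 0 0).re) ^ 2 ≤ (CQ 2 * R).trace.re := by
  obtain ⟨⟨hpos, -⟩, rfl, rfl⟩ := hR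
  have hx := (Complex.le_def.1 (hpos.diag_nonneg (i := (0, 0)))).1
  have hy := (Complex.le_def.1 (hpos.diag_nonneg (i := (0, 1)))).1
  have hz := (Complex.le_def.1 (hpos.diag_nonneg (i := (1, 0)))).1
  have hyi := (Complex.le_def.1 (hpos.diag_nonneg (i := (0, 1)))).2
  have hzi := (Complex.le_def.1 (hpos.diag_nonneg (i := (1, 0)))).2
  have hsym : R (1, 0) (0, 1) = star (R (0, 1) (1, 0)) := (hpos.isHermitian.apply _ _).symm
  have hdet := (Complex.le_def.1 (hpos.submatrix ![((0 : Fin 2), (1 : Fin 2)), (1, 0)]).det_nonneg).1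
  rw [CQ_cost, hsym]
  rw [Matrix.det_fin_two] at hdet
  simp [hsym] at hdet hx hy hz hyi hzi
  simp only [trA, trB, Matrix.of_apply, Fin.sum_univ_two, Complex.add_re]
  have hcost : (1 / 2 * (R (0, 1) (0, 1) + R (1, 0) (1, 0) - R (0, 1) (1, 0)
      - star (R (0, 1) (1, 0)))).re = 1 / 2 * ((R (0, 1) (0, 1)).re + (R (1, 0) (1, 0)).re
      - 2 * (R (0, 1) (1, 0)).re) := by
    simp; ring
  rw [hcost]
  rw [← hyi, ← hzi] at hdet
  generalize (R (0, 0) (0, 0)).re = x at *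
  generalize (R (0, 1) (0, 1)).re = y at *
  generalize (R (1, 0) (1, 0)).re = z at *
  generalize (R (0, 1) (1, 0)).re = v at *
  generalize (R (0, 1) (1, 0)).im = w at *
  have h1 : v ≤ √y * √z := by
    rw [← Real.sqrt_mul hy]
    exact Real.le_sqrt_of_sq_le (by nlinarith [sq_nonneg w])
  have h2 : x + √y * √z ≤ √(x + y) * √(x + z) := by
    rw [← Real.sqrt_mul (add_nonneg hx hy)]
    apply Real.le_sqrt_of_sq_le
    nlinarith [Real.sq_sqrt hy, Real.sq_sqrt hz, mul_nonneg hx (sq_nonneg (√y - √z))]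
  nlinarith [Real.sq_sqrt (add_nonneg hx hy), Real.sq_sqrt (add_nonneg hx hz)]

/-- Conjugating a coupling by `U ⊗ U` conjugates the marginals and keeps the cost. -/
theorem exists_conj_coupling {A B : Matrix (Fin 2) (Fin 2) ℂ}
    {R : Matrix (Fin 2 × Fin 2) (Fin 2 × Fin 2) ℂ} (hR : R ∈ QCouplings A B)
    {U : Matrix (Fin 2) (Fin 2) ℂ} (hU : Uᴴ * U = 1) :
    ∃ R' ∈ QCouplings (Uᴴ * A * U) (Uᴴ * B * U), (CQ 2 * R').trace = (CQ 2 * R).trace := by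
  obtain ⟨⟨hpos, htr⟩, rfl, rfl⟩ := hR
  have hU' : U * Uᴴ = 1 := mul_eq_one_comm.1 hU
  have h (k l : Fin 2) := congrFun (congrFun hU' k) l
  simp only [Matrix.mul_apply, Fin.sum_univ_two, Matrix.conjTranspose_apply] at h
  have h00 := h 0 0
  have h01 := h 0 1
  have h10 := h 1 0
  have h11 := h 1 1
  simp only [Matrix.one_apply_eq, ne_eq, one_ne_zero, zero_ne_one, not_false_eq_true,
    Matrix.one_apply_ne] at h00 h01 h10 h11
  have hB : trB ((kron U U)ᴴ * R * kron U U) = Uᴴ * trB R * U := by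
    ext i j
    simp only [trB, kron, Matrix.of_apply, Matrix.mul_apply, Fintype.sum_prod_type,
      Fin.sum_univ_two, Matrix.conjTranspose_apply, star_mul']
    linear_combination
      (star (U 0 i) * U 0 j * R (0, 0) (0, 0) + star (U 0 i) * U 1 j * R (0, 0) (1, 0) +
        star (U 1 i) * U 0 j * R (1, 0) (0, 0) + star (U 1 i) * U 1 j * R (1, 0) (1, 0)) * h00 +
      (star (U 0 i) * U 0 j * R (0, 0) (0, 1) + star (U 0 i) * U 1 j * R (0, 0) (1, 1) +
        star (U 1 i) * U 0 j * R (1, 0) (0, 1) + star (U 1 i) * U 1 j * R (1, 0) (1, 1)) * h10 +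
      (star (U 0 i) * U 0 j * R (0, 1) (0, 0) + star (U 0 i) * U 1 j * R (0, 1) (1, 0) +
        star (U 1 i) * U 0 j * R (1, 1) (0, 0) + star (U 1 i) * U 1 j * R (1, 1) (1, 0)) * h01 +
      (star (U 0 i) * U 0 j * R (0, 1) (0, 1) + star (U 0 i) * U 1 j * R (0, 1) (1, 1) +
        star (U 1 i) * U 0 j * R (1, 1) (0, 1) + star (U 1 i) * U 1 j * R (1, 1) (1, 1)) * h11
  have hA : trA ((kron U U)ᴴ * R * kron U U) = Uᴴ * trA R * U := by
    ext i j
    simp only [trA, kron, Matrix.of_apply, Matrix.mul_apply, Fintype.sum_prod_type,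
      Fin.sum_univ_two, Matrix.conjTranspose_apply, star_mul']
    linear_combination
      (star (U 0 i) * U 0 j * R (0, 0) (0, 0) + star (U 0 i) * U 1 j * R (0, 0) (0, 1) +
        star (U 1 i) * U 0 j * R (0, 1) (0, 0) + star (U 1 i) * U 1 j * R (0, 1) (0, 1)) * h00 +
      (star (U 0 i) * U 0 j * R (0, 0) (1, 0) + star (U 0 i) * U 1 j * R (0, 0) (1, 1) +
        star (U 1 i) * U 0 j * R (0, 1) (1, 0) + star (U 1 i) * U 1 j * R (0, 1) (1, 1)) * h10 +
      (star (U 0 i) * U 0 j * R (1, 0) (0, 0) + star (U 0 i) * U 1 j * R (1, 0) (0, 1) +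
        star (U 1 i) * U 0 j * R (1, 1) (0, 0) + star (U 1 i) * U 1 j * R (1, 1) (0, 1)) * h01 +
      (star (U 0 i) * U 0 j * R (1, 0) (1, 0) + star (U 0 i) * U 1 j * R (1, 0) (1, 1) +
        star (U 1 i) * U 0 j * R (1, 1) (1, 0) + star (U 1 i) * U 1 j * R (1, 1) (1, 1)) * h11
  have hW : kron U U * (kron U U)ᴴ = 1 := by
    change Matrix.kroneckerMap (· * ·) U U * (Matrix.kroneckerMap (· * ·) U U)ᴴ = 1
    rw [Matrix.conjTranspose_kronecker, ← Matrix.mul_kronecker_mul, hU', Matrix.one_kronecker_one]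
  have hS : kron U U * CQ 2 = CQ 2 * kron U U := by
    have : kron U U * swapM 2 = swapM 2 * kron U U := by
      ext ⟨i, p⟩ ⟨j, q⟩
      simp only [kron, swapM, Matrix.mul_apply, Matrix.of_apply, Fintype.sum_prod_type,
        Fin.sum_univ_two]
      fin_cases i <;> fin_cases p <;> fin_cases j <;> fin_cases q <;>
        simp <;> ring
    rw [CQ, Matrix.mul_smul, Matrix.smul_mul, Matrix.mul_sub, Matrix.sub_mul, this,
      Matrix.mul_one, Matrix.one_mul]
  refine ⟨(kron U U)ᴴ * R * kron U U, ⟨⟨hpos.conjTranspose_mul_mul_same _, ?_⟩, hB, hA⟩, ?_⟩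
  · rw [Matrix.trace_mul_cycle, hW, Matrix.one_mul, htr]
  · rw [← Matrix.mul_assoc, Matrix.trace_mul_comm, ← Matrix.mul_assoc, ← Matrix.mul_assoc, hS,
      Matrix.mul_assoc (CQ 2), hW, Matrix.mul_one]

/-- The coupling supported on `s e₀₁ + t e₁₀ + conj c e₁₁` and `e₁₁`. -/
theorem exists_coupling_of_offdiagonal {A B : Matrix (Fin 2) (Fin 2) ℂ} (hA : IsDensityMatrix A)
    (hB : IsDensityMatrix B) {c : ℂ} (hα : A 0 1 = √(A 0 0).re * c)
    (hβ : B 0 1 = √(B 0 0).re * c)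
    (hc : √(A 0 0).re ^ 2 + √(B 0 0).re ^ 2 + Complex.normSq c ≤ 1) :
    ∃ R ∈ QCouplings A B,
      (CQ 2 * R).trace.re = 1 / 2 * (√(A 0 0).re - √(B 0 0).re) ^ 2 := by
  have hA00 := hA.apply_zero_zero
  have hB00 := hB.apply_zero_zero
  have hA11 := hA.apply_one_one
  have hB11 := hB.apply_one_one
  generalize √(A 0 0).re = s at *
  generalize √(B 0 0).re = t at *
  have hw : (0 : ℂ) ≤ ((1 - s ^ 2 - t ^ 2 - Complex.normSq c : ℝ) : ℂ) := by
    rw [Complex.zero_le_real]; linarith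
  have hcc : c * (starRingEnd ℂ) c = (Complex.normSq c : ℂ) := Complex.mul_conj c
  obtain ⟨v, hv⟩ : ∃ v : Fin 2 × Fin 2 → ℂ, v = fun x => !![0, (s : ℂ); (t : ℂ), star c] x.1 x.2 :=
    ⟨_, rfl⟩
  have hv00 : v (0, 0) = 0 := by simp [hv]
  have hv01 : v (0, 1) = s := by simp [hv]
  have hv10 : v (1, 0) = t := by simp [hv]
  have hv11 : v (1, 1) = star c := by simp [hv]
  obtain ⟨R, hRdef⟩ : ∃ R : Matrix (Fin 2 × Fin 2) (Fin 2 × Fin 2) ℂ,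
      R = Matrix.vecMulVec v (star v) + ((1 - s ^ 2 - t ^ 2 - Complex.normSq c : ℝ) : ℂ) •
        Matrix.vecMulVec (Pi.single (1, 1) 1) (star (Pi.single (1, 1) 1)) := ⟨_, rfl⟩
  have hR (x y) : R x y = v x * star (v y) +
      if x = (1, 1) ∧ y = (1, 1) then
        ((1 - s ^ 2 - t ^ 2 - Complex.normSq c : ℝ) : ℂ) else 0 := by
    rw [hRdef]
    by_cases hx : x = (1, 1) <;> by_cases hy : y = (1, 1) <;>
      simp [Matrix.vecMulVec_apply, hx, hy]
  refine ⟨R, ⟨⟨?_, ?_⟩, ?_, ?_⟩, ?_⟩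
  · rw [hRdef]
    exact (Matrix.posSemidef_vecMulVec_self_star _).add
      ((Matrix.posSemidef_vecMulVec_self_star _).smul hw)
  · simp only [Matrix.trace, Matrix.diag_apply, Fintype.sum_prod_type, Fin.sum_univ_two, hR, hv00,
      hv01, hv10, hv11]
    simp
    linear_combination hcc
  · ext i j
    fin_cases i <;> fin_cases j <;>
      simp only [trB, Matrix.of_apply, Fin.sum_univ_two, hR, hv00, hv01, hv10, hv11, Fin.zero_eta,
        Fin.mk_one, hA.apply_one_zero, hα, hA00, hA11] <;> simp
    · ring
    · ring
    · linear_combination hcc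
  · ext i j
    fin_cases i <;> fin_cases j <;>
      simp only [trA, Matrix.of_apply, Fin.sum_univ_two, hR, hv00, hv01, hv10, hv11, Fin.zero_eta,
        Fin.mk_one, hB.apply_one_zero, hβ, hB00, hB11] <;> simp
    · ring
    · ring
    · linear_combination hcc
  · rw [CQ_cost]
    simp only [hR, hv01, hv10]
    simp [← Complex.ofReal_mul]
    ring

theorem exists_unitary_diagonalizing {A : Matrix (Fin 2) (Fin 2) ℂ} (hA : A.IsHermitian) :
    ∃ U : Matrix (Fin 2) (Fin 2) ℂ, Uᴴ * U = 1 ∧ (Uᴴ * A * U) 0 1 = 0 := by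
  refine ⟨hA.eigenvectorUnitary, Unitary.coe_star_mul_self _, ?_⟩
  have h := hA.conjStarAlgAut_star_eigenvectorUnitary
  rw [Unitary.conjStarAlgAut_star_apply] at h
  have h' := congrFun (congrFun h 0) 1
  simpa [Matrix.star_eq_conjTranspose] using h'

theorem conj_conj_conjTranspose {A U : Matrix (Fin 2) (Fin 2) ℂ} (hU : U * Uᴴ = 1) :
    (Uᴴ)ᴴ * (Uᴴ * A * U) * Uᴴ = A := by
  rw [Matrix.conjTranspose_conjTranspose,
    show U * (Uᴴ * A * U) * Uᴴ = (U * Uᴴ) * A * (U * Uᴴ) by simp only [Matrix.mul_assoc], hU,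
    Matrix.one_mul, Matrix.mul_one]

theorem exists_self_coupling_cost_zero {A : Matrix (Fin 2) (Fin 2) ℂ} (hA : IsDensityMatrix A) :
    ∃ R ∈ QCouplings A A, (CQ 2 * R).trace = 0 := by
  obtain ⟨U, hU, h01⟩ := exists_unitary_diagonalizing hA.1.isHermitian
  have hU' : U * Uᴴ = 1 := mul_eq_one_comm.1 hU
  have hD := hA.conj hU
  have h10 := hD.apply_one_zero
  have hm : Matrix.diagonal (fun x : Fin 2 × Fin 2 => if x.1 = x.2 then (Uᴴ * A * U) x.1 x.1 else 0)
      ∈ QCouplings (Uᴴ * A * U) (Uᴴ * A * U) := by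
    rw [h01, star_zero] at h10
    refine ⟨⟨Matrix.PosSemidef.diagonal fun x => ?_, ?_⟩, ?_, ?_⟩
    · dsimp only
      split_ifs
      exacts [hD.1.diag_nonneg, le_rfl]
    · rw [← hD.2]
      simp [Matrix.trace, Fintype.sum_prod_type, Fin.sum_univ_two]
    · ext i j
      fin_cases i <;> fin_cases j <;> simp [trB, h01, h10, Matrix.diagonal_apply]
    · ext i j
      fin_cases i <;> fin_cases j <;> simp [trA, h01, h10, Matrix.diagonal_apply]
  obtain ⟨R, hR, hcost⟩ := exists_conj_coupling hm (U := Uᴴ)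
    (by rw [Matrix.conjTranspose_conjTranspose, hU'])
  rw [conj_conj_conjTranspose hU'] at hR
  refine ⟨R, hR, hcost.trans ?_⟩
  rw [CQ_cost]
  simp

theorem eq_of_qubitForm_eq {A B : Matrix (Fin 2) (Fin 2) ℂ} (hA : IsDensityMatrix A)
    (hB : IsDensityMatrix B)
    (h : ∀ x y, qubitForm √(A 0 0).re (A 0 1) x y = qubitForm √(B 0 0).re (B 0 1) x y) :
    A = B := by
  have h0 : √(A 0 0).re ^ 2 = √(B 0 0).re ^ 2 := by simpa [qubitForm] using h 1 0
  have h1 := h 1 1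
  have hI := h 1 Complex.I
  simp only [qubitForm, h0] at h1 hI
  have h01 : A 0 1 = B 0 1 := by
    apply Complex.ext
    · simpa using h1
    · simpa using hI
  ext i j
  fin_cases i <;> fin_cases j
  · simp only [Fin.zero_eta]; rw [hA.apply_zero_zero, hB.apply_zero_zero, h0]
  · exact h01
  · simp only [Fin.zero_eta, Fin.mk_one]; rw [hA.apply_one_zero, hB.apply_one_zero, h01]
  · simp only [Fin.mk_one]; rw [hA.apply_one_one, hB.apply_one_one, h0]

/-- When the standard basis is extremal, the lower bound on the cost is attained. -/
theorem exists_optimal_coupling {A B : Matrix (Fin 2) (Fin 2) ℂ} (hA : IsDensityMatrix A)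
    (hB : IsDensityMatrix B)
    (hmax : ∀ V : Matrix (Fin 2) (Fin 2) ℂ, Vᴴ * V = 1 →
      (√((Vᴴ * A * V) 0 0).re - √((Vᴴ * B * V) 0 0).re) ^ 2 ≤
        (√(A 0 0).re - √(B 0 0).re) ^ 2) :
    ∃ R ∈ QCouplings A B,
      (CQ 2 * R).trace.re = 1 / 2 * (√(A 0 0).re - √(B 0 0).re) ^ 2 := by
  have habs := abs_sqrt_qubitForm_sub_le hA hB fun V hV => sq_le_sq.1 (hmax V hV)
  rcases lt_trichotomy √(A 0 0).re √(B 0 0).re with hlt | heq | hgt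
  · obtain ⟨c, hβ, hα, hc⟩ := exists_optimal_offdiagonal (Real.sqrt_nonneg _) hlt hB.normSq_le
      hA.normSq_le hB.qubitForm_nonneg hA.qubitForm_nonneg fun x y => by
        rw [abs_sub_comm]
        simpa [abs_of_neg (sub_neg.2 hlt)] using habs x y
    exact exists_coupling_of_offdiagonal hA hB hα hβ (by linarith)
  · have hAB : A = B := eq_of_qubitForm_eq hA hB fun x y => by
      have h := habs x y
      rw [heq, sub_self, abs_zero, zero_mul, ← heq] at h
      exact (Real.sqrt_inj (hA.qubitForm_nonneg x y) (hB.qubitForm_nonneg x y)).1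
        (sub_eq_zero.1 (abs_nonpos_iff.1 (by rwa [← heq])))
    subst hAB
    obtain ⟨R, hR, h0⟩ := exists_self_coupling_cost_zero hA
    exact ⟨R, hR, by simp [h0]⟩
  · obtain ⟨c, hα, hβ, hc⟩ := exists_optimal_offdiagonal (Real.sqrt_nonneg _) hgt hA.normSq_le
      hB.normSq_le hA.qubitForm_nonneg hB.qubitForm_nonneg fun x y => by
        simpa [abs_of_pos (sub_pos.2 hgt)] using habs x y
    exact exists_coupling_of_offdiagonal hA hB hα hβ hc

theorem isCompact_setOf_conjTranspose_mul_self_eq_one :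
    IsCompact {U : Matrix (Fin 2) (Fin 2) ℂ | Uᴴ * U = 1} := by
  refine IsCompact.of_isClosed_subset (isCompact_univ_pi fun _ : Fin 2 =>
    isCompact_univ_pi fun _ : Fin 2 => isCompact_closedBall (0 : ℂ) 1) ?_ fun U hU i _ j _ => ?_
  · exact isClosed_eq (by fun_prop) continuous_const
  · rw [mem_closedBall_zero_iff]
    exact entry_norm_bound_of_unitary (Matrix.mem_unitaryGroup_iff'.2 hU) i j
/-- the qubit quantum optimal transport cost as a maximum over
unitaries of a squared difference of square roots of first diagonal entries. -/
theorem qot_qubit_sup_formula (ρA ρB : Matrix (Fin 2) (Fin 2) ℂ)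
    (hA : IsDensityMatrix ρA) (hB : IsDensityMatrix ρB) :
    QOT (CQ 2) ρA ρB =
      (1 / 2) * sSup {r : ℝ | ∃ U : Matrix (Fin 2) (Fin 2) ℂ, Uᴴ * U = 1 ∧
        r = (Real.sqrt (((Uᴴ * ρA * U) 0 0).re) -
              Real.sqrt (((Uᴴ * ρB * U) 0 0).re)) ^ 2} := by
  have hcont : Continuous fun U : Matrix (Fin 2) (Fin 2) ℂ =>
      (√((Uᴴ * ρA * U) 0 0).re - √((Uᴴ * ρB * U) 0 0).re) ^ 2 := by
    have h (ρ : Matrix (Fin 2) (Fin 2) ℂ) :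
        Continuous fun U : Matrix (Fin 2) (Fin 2) ℂ => √((Uᴴ * ρ * U) 0 0).re :=
      Real.continuous_sqrt.comp (Complex.continuous_re.comp
        (Continuous.matrix_elem (by fun_prop) 0 0))
    exact ((h ρA).sub (h ρB)).pow 2
  obtain ⟨U, hU, hmax⟩ := isCompact_setOf_conjTranspose_mul_self_eq_one.exists_isMaxOn
    ⟨1, by simp⟩ hcont.continuousOn
  have hU1 : Uᴴ * U = 1 := hU
  have hU2 : U * Uᴴ = 1 := mul_eq_one_comm.1 hU1
  have hgreatest : IsGreatest {r : ℝ | ∃ U : Matrix (Fin 2) (Fin 2) ℂ, Uᴴ * U = 1 ∧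
      r = (√((Uᴴ * ρA * U) 0 0).re - √((Uᴴ * ρB * U) 0 0).re) ^ 2}
      ((√((Uᴴ * ρA * U) 0 0).re - √((Uᴴ * ρB * U) 0 0).re) ^ 2) := by
    refine ⟨⟨U, hU1, rfl⟩, ?_⟩
    rintro _ ⟨V, hV, rfl⟩
    exact hmax hV
  obtain ⟨R, hR, hcost⟩ := exists_optimal_coupling (hA.conj hU1) (hB.conj hU1) fun V hV => by
    have h (ρ : Matrix (Fin 2) (Fin 2) ℂ) : Vᴴ * (Uᴴ * ρ * U) * V = (U * V)ᴴ * ρ * (U * V) := by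
      simp only [Matrix.conjTranspose_mul, Matrix.mul_assoc]
    rw [h, h]
    refine hgreatest.2 ⟨U * V, ?_, rfl⟩
    rw [Matrix.conjTranspose_mul, Matrix.mul_assoc, ← Matrix.mul_assoc Uᴴ, hU1, Matrix.one_mul, hV]
  obtain ⟨R', hR', hcost'⟩ := exists_conj_coupling hR (U := Uᴴ)
    (by rw [Matrix.conjTranspose_conjTranspose, hU2])
  rw [conj_conj_conjTranspose hU2, conj_conj_conjTranspose hU2] at hR'
  have hleast : IsLeast ((fun R => ((CQ 2 * R).trace).re) '' QCouplings ρA ρB)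
      (1 / 2 * (√((Uᴴ * ρA * U) 0 0).re - √((Uᴴ * ρB * U) 0 0).re) ^ 2) := by
    refine ⟨⟨R', hR', (congrArg Complex.re hcost').trans hcost⟩, ?_⟩
    rintro _ ⟨S, hS, rfl⟩
    obtain ⟨S', hS', hcostS⟩ := exists_conj_coupling hS hU1
    exact (half_sq_sqrt_sub_le_cost hS').trans_eq (by rw [hcostS])
  rw [QOT, hleast.csInf_eq, hgreatest.csSup_eq]
end

section
/- The function (ρA, ρB) ↦ √(T_{C^Q}(ρA, ρB)) is a metric on the set Ω_2 of qubit density matrices: for all ρA, ρB, ρC ∈ Ω_2, √(T_{C^Q}(ρA,ρB)) = √(T_{C^Q}(ρB,ρA)) ≥ 0, √(T_{C^Q}(ρA,ρB)) = 0 if and only if ρA = ρB, and √(T_{C^Q}(ρA,ρC)) ≤ √(T_{C^Q}(ρA,ρB)) + √(T_{C^Q}(ρB,ρC)). -/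
open Matrix ComplexOrder

/-- The operator on `ℂ² ⊗ ℂ²` whose rank-one components are the vectorizations of the `M k`. -/
noncomputable def vecGram {K : Type*} [Fintype K] (M : K → Matrix (Fin 2) (Fin 2) ℂ) :
    Matrix (Fin 2 × Fin 2) (Fin 2 × Fin 2) ℂ :=
  Matrix.of fun x y => ∑ k, M k x.1 x.2 * star (M k y.1 y.2)

/-- The real part of the quadratic form of a `2 × 2` matrix. -/
noncomputable def quadForm (A : Matrix (Fin 2) (Fin 2) ℂ) (v : Fin 2 → ℂ) : ℝ :=
  (star v ⬝ᵥ A *ᵥ v).re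

/-- The squared Euclidean norm of a vector in `ℂ²`. -/
noncomputable def sqNorm (v : Fin 2 → ℂ) : ℝ := Complex.normSq (v 0) + Complex.normSq (v 1)

lemma vecGram_posSemidef {K : Type*} [Fintype K] (M : K → Matrix (Fin 2) (Fin 2) ℂ) :
    (vecGram M).PosSemidef := by
  have h : vecGram M =
      ∑ k, vecMulVec (fun x : Fin 2 × Fin 2 => M k x.1 x.2) (star fun x => M k x.1 x.2) := by
    ext x y
    simp [vecGram, vecMulVec, Matrix.sum_apply]
  rw [h]
  exact posSemidef_sum _ fun k _ => posSemidef_vecMulVec_self_star _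

open scoped MatrixOrder in
lemma exists_eq_vecGram {R : Matrix (Fin 2 × Fin 2) (Fin 2 × Fin 2) ℂ} (hR : R.PosSemidef) :
    ∃ M : Fin 2 × Fin 2 → Matrix (Fin 2) (Fin 2) ℂ, R = vecGram M := by
  obtain ⟨B, rfl⟩ := CStarAlgebra.nonneg_iff_eq_star_mul_self.mp hR.nonneg
  refine ⟨fun k => Matrix.of fun i p => star (B k (i, p)), ?_⟩
  ext x y
  simp [vecGram, Matrix.mul_apply, Matrix.star_apply]

lemma trB_vecGram {K : Type*} [Fintype K] (M : K → Matrix (Fin 2) (Fin 2) ℂ) :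
    trB (vecGram M) = ∑ k, M k * (M k)ᴴ := by
  ext i j
  simp [trB, vecGram, Matrix.sum_apply, Matrix.mul_apply, Finset.sum_add_distrib]

lemma trA_vecGram {K : Type*} [Fintype K] (M : K → Matrix (Fin 2) (Fin 2) ℂ) :
    trA (vecGram M) = ∑ k, (M k)ᵀ * (M k)ᵀᴴ := by
  ext i j
  simp [trA, vecGram, Matrix.sum_apply, Matrix.mul_apply, Finset.sum_add_distrib]

lemma trace_CQ_mul_vecGram {K : Type*} [Fintype K] (M : K → Matrix (Fin 2) (Fin 2) ℂ) :
    ((CQ 2 * vecGram M).trace).re = (∑ k, Complex.normSq (M k 0 1 - M k 1 0)) / 2 := by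
  have h : (CQ 2 * vecGram M).trace =
      ∑ k, (1 / 2 : ℂ) * ((M k 0 1 - M k 1 0) * star (M k 0 1 - M k 1 0)) := by
    simp only [Matrix.trace, Matrix.diag, Matrix.mul_apply, Fintype.sum_prod_type, Fin.sum_univ_two,
      CQ, swapM, vecGram, Matrix.smul_apply, Matrix.sub_apply, Matrix.one_apply, Matrix.of_apply]
    simp [Finset.mul_sum, ← Finset.sum_add_distrib, -Finset.sum_neg_distrib]
    refine Finset.sum_congr rfl fun k _ => ?_
    ring
  rw [h, Complex.re_sum, Finset.sum_div]
  refine Finset.sum_congr rfl fun k _ => ?_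
  simp [Complex.normSq_apply]
  ring

lemma bddBelow_cost (A B : Matrix (Fin 2) (Fin 2) ℂ) :
    BddBelow ((fun R => ((CQ 2 * R).trace).re) '' QCouplings A B) := by
  refine ⟨0, ?_⟩
  rintro _ ⟨R, ⟨⟨hR, -⟩, -, -⟩, rfl⟩
  obtain ⟨M, rfl⟩ := exists_eq_vecGram hR
  simp only [trace_CQ_mul_vecGram]
  exact div_nonneg (Finset.sum_nonneg fun k _ => Complex.normSq_nonneg _) (by norm_num)

lemma vecGram_mem_QCouplings {K : Type*} [Fintype K] {M : K → Matrix (Fin 2) (Fin 2) ℂ}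
    {A B : Matrix (Fin 2) (Fin 2) ℂ} (hA : IsDensityMatrix A)
    (h₁ : ∑ k, M k * (M k)ᴴ = A) (h₂ : ∑ k, (M k)ᵀ * (M k)ᵀᴴ = B) :
    vecGram M ∈ QCouplings A B := by
  refine ⟨⟨vecGram_posSemidef M, ?_⟩, by rw [trB_vecGram, h₁], by rw [trA_vecGram, h₂]⟩
  rw [← hA.2, ← h₁, ← trB_vecGram]
  simp [Matrix.trace, trB, Fintype.sum_prod_type]

lemma quadForm_sum_mul_conjTranspose {K : Type*} [Fintype K]
    (M : K → Matrix (Fin 2) (Fin 2) ℂ) (v : Fin 2 → ℂ) :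
    quadForm (∑ k, M k * (M k)ᴴ) v =
      ∑ x : K × Fin 2, ‖star (v 0) * M x.1 0 x.2 + star (v 1) * M x.1 1 x.2‖ ^ 2 := by
  have h : star v ⬝ᵥ (∑ k, M k * (M k)ᴴ) *ᵥ v =
      ∑ k, (star v ⬝ᵥ (M k * (M k)ᴴ) *ᵥ v) := by
    rw [Matrix.sum_mulVec, dotProduct_sum]
  rw [quadForm, h, Complex.re_sum, Fintype.sum_prod_type]
  refine Finset.sum_congr rfl fun k _ => ?_
  simp [Complex.sq_norm, Complex.normSq_apply, dotProduct, Matrix.mulVec, Matrix.mul_apply]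
  ring

lemma sq_sqrt_quadForm_sub_le {A B : Matrix (Fin 2) (Fin 2) ℂ}
    {R : Matrix (Fin 2 × Fin 2) (Fin 2 × Fin 2) ℂ} (hR : R ∈ QCouplings A B)
    {v : Fin 2 → ℂ} (hv : sqNorm v = 1) :
    (√(quadForm A v) - √(quadForm B v)) ^ 2 / 2 ≤ ((CQ 2 * R).trace).re := by
  obtain ⟨⟨hR, -⟩, rfl, rfl⟩ := hR
  obtain ⟨M, rfl⟩ := exists_eq_vecGram hR
  rw [trace_CQ_mul_vecGram, trB_vecGram, trA_vecGram, quadForm_sum_mul_conjTranspose,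
    quadForm_sum_mul_conjTranspose]
  let x : EuclideanSpace ℂ ((Fin 2 × Fin 2) × Fin 2) := WithLp.toLp 2 fun x =>
    star (v 0) * M x.1 0 x.2 + star (v 1) * M x.1 1 x.2
  let y : EuclideanSpace ℂ ((Fin 2 × Fin 2) × Fin 2) := WithLp.toLp 2 fun x =>
    star (v 0) * (M x.1)ᵀ 0 x.2 + star (v 1) * (M x.1)ᵀ 1 x.2
  have hxy : ‖x - y‖ ^ 2 = ∑ k, Complex.normSq (M k 0 1 - M k 1 0) := by
    rw [EuclideanSpace.norm_sq_eq, Fintype.sum_prod_type]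
    refine Finset.sum_congr rfl fun k _ => ?_
    rw [← one_mul (Complex.normSq _), ← hv]
    simp [x, y, sqNorm, Complex.sq_norm, Complex.normSq_apply]
    ring
  have h := abs_norm_sub_norm_le x y
  rw [EuclideanSpace.norm_eq x, EuclideanSpace.norm_eq y] at h
  have h' := pow_le_pow_left₀ (abs_nonneg _) h 2
  rw [sq_abs, hxy] at h'
  linarith

/-- Optimality of the first basis vector forces the off-diagonal entries to be proportional. -/
lemma off_diag_proportional {p q : ℝ} (hq : 0 < q) (hqp : q < p) {α β : ℂ}
    (H : ∀ x : ℂ, |√(p ^ 2 + 2 * (α * x).re + (1 - p ^ 2) * Complex.normSq x) -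
      √(q ^ 2 + 2 * (β * x).re + (1 - q ^ 2) * Complex.normSq x)| ≤
      (p - q) * √(1 + Complex.normSq x)) :
    α * q = β * p := by
  have hp : 0 < p := hq.trans hqp
  have key : ∀ e : ℂ, (α * e).re * q = (β * e).re * p := by
    intro e
    let g : ℝ → ℝ := fun t =>
      √(p ^ 2 + 2 * (α * e).re * t + (1 - p ^ 2) * Complex.normSq e * t ^ 2) -
      √(q ^ 2 + 2 * (β * e).re * t + (1 - q ^ 2) * Complex.normSq e * t ^ 2) -
      (p - q) * √(1 + Complex.normSq e * t ^ 2)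
    have hsq : ∀ r c d : ℝ, 0 < r →
        HasDerivAt (fun t : ℝ => √(r ^ 2 + 2 * c * t + d * t ^ 2)) (c / r) 0 := by
      intro r c d hr
      have h0 : HasDerivAt (fun t : ℝ => r ^ 2 + 2 * c * t + d * t ^ 2) (2 * c) 0 := by
        have := (((hasDerivAt_id (0 : ℝ)).const_mul (2 * c)).const_add (r ^ 2)).add
          (((hasDerivAt_id (0 : ℝ)).pow 2).const_mul d)
        exact this.congr_deriv (by simp)
      refine (h0.sqrt (by simp [hr.ne'])).congr_deriv ?_
      simp [Real.sqrt_sq hr.le]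
      field_simp
    have hg : HasDerivAt g ((α * e).re / p - (β * e).re / q) 0 := by
      have h3 := hsq 1 0 (Complex.normSq e) one_pos
      have := ((hsq p (α * e).re ((1 - p ^ 2) * Complex.normSq e) hp).sub
        (hsq q (β * e).re ((1 - q ^ 2) * Complex.normSq e) hq)).sub (h3.const_mul (p - q))
      refine (this.congr_deriv (by simp)).congr_of_eventuallyEq
        (Filter.Eventually.of_forall fun t => ?_)
      simp [g]
    have hmax : IsLocalMax g 0 := by
      refine Filter.Eventually.of_forall fun t => ?_
      have h0 : g 0 = 0 := by simp [g, Real.sqrt_sq hp.le, Real.sqrt_sq hq.le]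
      have ht := (le_abs_self _).trans (H (e * t))
      have e1 : ∀ γ : ℂ, (γ * (e * t)).re = (γ * e).re * t := by
        intro γ; rw [← mul_assoc, Complex.re_mul_ofReal]
      have e2 : Complex.normSq (e * t) = Complex.normSq e * t ^ 2 := by
        simp [Complex.normSq_mul, sq]
      rw [e1, e1, e2, ← mul_assoc, ← mul_assoc, ← mul_assoc, ← mul_assoc] at ht
      rw [h0]
      simp only [g]
      linarith
    have := hmax.hasDerivAt_eq_zero hg
    exact (div_eq_div_iff hp.ne' hq.ne').mp (sub_eq_zero.mp this)
  have h1 := key 1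
  have h2 := key Complex.I
  apply Complex.ext
  · simpa using h1
  · simp at h2 ⊢
    linarith

/-- Optimality of the first basis vector bounds the off-diagonal entries. -/
lemma off_diag_bound {p q : ℝ} (hq : 0 < q) (hqp : q < p) (hp1 : p ≤ 1) {α β : ℂ}
    (hα : Complex.normSq α ≤ p ^ 2 * (1 - p ^ 2)) (hαβ : α * q = β * p)
    (H : ∀ x : ℂ, |√(p ^ 2 + 2 * (α * x).re + (1 - p ^ 2) * Complex.normSq x) -
      √(q ^ 2 + 2 * (β * x).re + (1 - q ^ 2) * Complex.normSq x)| ≤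
      (p - q) * √(1 + Complex.normSq x))
    (H1 : |√(1 - p ^ 2) - √(1 - q ^ 2)| ≤ p - q) :
    Complex.normSq α ≤ p ^ 2 * (1 - p ^ 2 - q ^ 2) := by
  have hp : 0 < p := hq.trans hqp
  have hpC : (p : ℂ) ≠ 0 := by exact_mod_cast hp.ne'
  by_cases h0 : α = 0
  · subst h0
    have hs : √(1 - p ^ 2) ^ 2 = 1 - p ^ 2 := Real.sq_sqrt (by nlinarith)
    have ht : √(1 - q ^ 2) ^ 2 = 1 - q ^ 2 := Real.sq_sqrt (by nlinarith)
    have hs0 := Real.sqrt_nonneg (1 - p ^ 2)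
    have ht0 := Real.sqrt_nonneg (1 - q ^ 2)
    set s := √(1 - p ^ 2)
    set t := √(1 - q ^ 2)
    have h := (abs_le.mp H1).1
    have hts : 0 < t - s := by nlinarith
    have hts' : p + q ≤ t + s := by
      have : (t - s) * (t + s) = (p - q) * (p + q) := by linear_combination ht - hs
      by_contra hcon
      push Not at hcon
      have h1 : (t - s) * (t + s) < (t - s) * (p + q) := mul_lt_mul_of_pos_left hcon hts
      have h2 : (t - s) * (p + q) ≤ (p - q) * (p + q) :=
        mul_le_mul_of_nonneg_right (by linarith) (by linarith)
      linarith
    have : q ≤ s := by linarith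
    simp only [map_zero]
    have : 0 ≤ 1 - p ^ 2 - q ^ 2 := by nlinarith
    positivity
  · obtain ⟨w, hw⟩ : ∃ w, w = Complex.normSq α / p ^ 2 := ⟨_, rfl⟩
    have hwα : Complex.normSq α = p ^ 2 * w := by rw [hw]; field_simp
    have hw0 : 0 < w := by rw [hw]; exact div_pos (Complex.normSq_pos.mpr h0) (by positivity)
    have hwp : w ≤ 1 - p ^ 2 := by
      rw [hwα] at hα
      exact le_of_mul_le_mul_left hα (by positivity)
    rw [hwα]
    refine mul_le_mul_of_nonneg_left ?_ (by positivity)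
    by_contra! hcon
    obtain ⟨X, hX⟩ : ∃ X, X = (p + q) ^ 2 / w := ⟨_, rfl⟩
    have hX0 : 0 < X := by rw [hX]; positivity
    have hwX : w * X = (p + q) ^ 2 := by rw [hX]; field_simp
    have hβ : β = α * q / p := by field_simp; exact hαβ.symm
    have h := H (-(p + q) * p / α)
    have e1 : α * (-(p + q) * p / α) = ((-(p + q) * p : ℝ) : ℂ) := by
      push_cast; field_simp
    have e2 : β * (-(p + q) * p / α) = ((-(p + q) * q : ℝ) : ℂ) := by
      rw [hβ]; push_cast; field_simp
    have e3 : Complex.normSq (-(p + q) * p / α) = X := by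
      rw [map_div₀, hwα, hX]
      have : (-(p + q) * p : ℂ) = ((-(p + q) * p : ℝ) : ℂ) := by push_cast; ring
      rw [this, Complex.normSq_ofReal]
      field_simp
    rw [e1, e2, e3, Complex.ofReal_re, Complex.ofReal_re] at h
    obtain ⟨k, hk⟩ : ∃ k, k = 1 - p ^ 2 - q ^ 2 - w := ⟨_, rfl⟩
    have hk0 : k < 0 := by linarith
    have hkq : 0 ≤ k + q ^ 2 := by linarith
    have a1 : p ^ 2 + 2 * (-(p + q) * p) + (1 - p ^ 2) * X = q ^ 2 + (k + q ^ 2) * X := by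
      rw [hk]; linear_combination hwX
    have a2 : q ^ 2 + 2 * (-(p + q) * q) + (1 - q ^ 2) * X = p ^ 2 + (k + p ^ 2) * X := by
      rw [hk]; linear_combination hwX
    rw [a1, a2] at h
    have n1 : 0 ≤ q ^ 2 + (k + q ^ 2) * X := by positivity
    have n2 : 0 ≤ p ^ 2 + (k + p ^ 2) * X := by
      have : 0 ≤ k + p ^ 2 := by nlinarith
      positivity
    have s1 := Real.sq_sqrt n1
    have s2 := Real.sq_sqrt n2
    have s3 := Real.sq_sqrt (show 0 ≤ 1 + X by positivity)
    have p1 := Real.sqrt_nonneg (q ^ 2 + (k + q ^ 2) * X)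
    have p2 := Real.sqrt_nonneg (p ^ 2 + (k + p ^ 2) * X)
    set a := √(q ^ 2 + (k + q ^ 2) * X)
    set b := √(p ^ 2 + (k + p ^ 2) * X)
    have h2 := pow_le_pow_left₀ (abs_nonneg _) h 2
    rw [sq_abs, mul_pow, s3] at h2
    have hL : 0 ≤ p * q * (1 + X) + k * X := by
      have h1 : 0 ≤ k + p * q := by nlinarith
      have h2 : 0 ≤ (k + p * q) * X := by positivity
      have h3 : 0 ≤ p * q := by positivity
      linarith
    have hlt : a * b < p * q * (1 + X) + k * X := by
      refine lt_of_pow_lt_pow_left₀ 2 hL ?_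
      have hneg : X * (p - q) ^ 2 * k * (1 + X) < 0 := by
        have : 0 < X * (p - q) ^ 2 * (1 + X) := by
          have : 0 < p - q := by linarith
          positivity
        have := mul_neg_of_neg_of_pos hk0 this
        linarith
      rw [mul_pow, s1, s2]
      linarith
    linarith

lemma IsDensityMatrix.exists_eq {A : Matrix (Fin 2) (Fin 2) ℂ} (hA : IsDensityMatrix A) :
    ∃ (p : ℝ) (α : ℂ), A = !![(p : ℂ) ^ 2, α; star α, 1 - (p : ℂ) ^ 2] ∧ 0 ≤ p ∧ p ≤ 1 ∧
      Complex.normSq α ≤ p ^ 2 * (1 - p ^ 2) := by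
  obtain ⟨hpsd, htr⟩ := hA
  have h0 := hpsd.diag_nonneg (i := 0)
  have h1 := hpsd.diag_nonneg (i := 1)
  have hdet := hpsd.det_nonneg
  have hoff : A 1 0 = star (A 0 1) := (hpsd.1.apply 1 0).symm
  rw [Matrix.trace_fin_two] at htr
  rw [Matrix.det_fin_two, hoff] at hdet
  have h11 : A 1 1 = 1 - A 0 0 := by rw [← htr]; ring
  rw [h11] at h1 hdet
  obtain ⟨h0r, h0i⟩ := Complex.le_def.mp h0
  obtain ⟨h1r, -⟩ := Complex.le_def.mp h1
  obtain ⟨hdr, -⟩ := Complex.le_def.mp hdet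
  have hp : √(A 0 0).re ^ 2 = (A 0 0).re := Real.sq_sqrt (by simpa using h0r)
  have h00 : A 0 0 = ((√(A 0 0).re : ℝ) : ℂ) ^ 2 := by
    rw [← Complex.ofReal_pow, hp]
    exact Complex.ext rfl (by simpa using h0i.symm)
  refine ⟨√(A 0 0).re, A 0 1, ?_, Real.sqrt_nonneg _, ?_, ?_⟩
  · ext i j
    fin_cases i <;> fin_cases j <;> simp [← h00, hoff, h11]
  · exact Real.sqrt_le_one.mpr (by simpa using h1r)
  · rw [hp, Complex.normSq_apply]
    simp at hdr h0i
    rw [← h0i] at hdr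
    linarith

lemma quadForm_fin_two (p : ℝ) (α : ℂ) (v : Fin 2 → ℂ) :
    quadForm !![(p : ℂ) ^ 2, α; star α, 1 - (p : ℂ) ^ 2] v =
      p ^ 2 * Complex.normSq (v 0) + 2 * (star (v 0) * α * v 1).re +
        (1 - p ^ 2) * Complex.normSq (v 1) := by
  simp [quadForm, dotProduct, Matrix.mulVec, Complex.normSq_apply, sq]
  ring

lemma quadForm_smul (A : Matrix (Fin 2) (Fin 2) ℂ) (r : ℝ) (v : Fin 2 → ℂ) :
    quadForm A ((r : ℂ) • v) = r ^ 2 * quadForm A v := by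
  simp [quadForm, dotProduct, Matrix.mulVec]
  ring

lemma quadForm_nonneg {A : Matrix (Fin 2) (Fin 2) ℂ} (hA : A.PosSemidef) (v : Fin 2 → ℂ) :
    0 ≤ quadForm A v :=
  (Complex.le_def.mp (hA.dotProduct_mulVec_nonneg v)).1

lemma sqNorm_nonneg (v : Fin 2 → ℂ) : 0 ≤ sqNorm v :=
  add_nonneg (Complex.normSq_nonneg _) (Complex.normSq_nonneg _)

lemma sqNorm_eq_quadForm_one (v : Fin 2 → ℂ) : sqNorm v = quadForm 1 v := by
  simp [sqNorm, quadForm, dotProduct, Complex.normSq_apply]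

lemma exists_unit_smul (w : Fin 2 → ℂ) :
    ∃ u, sqNorm u = 1 ∧ w = ((√(sqNorm w) : ℝ) : ℂ) • u := by
  rcases (sqNorm_nonneg w).eq_or_lt with h | h
  · have h' := h
    rw [sqNorm] at h'
    have h0 : w 0 = 0 := Complex.normSq_eq_zero.mp
      (by linarith [Complex.normSq_nonneg (w 0), Complex.normSq_nonneg (w 1)])
    have h1 : w 1 = 0 := Complex.normSq_eq_zero.mp
      (by linarith [Complex.normSq_nonneg (w 0), Complex.normSq_nonneg (w 1)])
    refine ⟨![1, 0], by simp [sqNorm], ?_⟩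
    ext i
    fin_cases i <;> simp [← h, h0, h1]
  · have hs := Real.sqrt_pos.mpr h
    have hsC : ((√(sqNorm w) : ℝ) : ℂ) ≠ 0 := by exact_mod_cast hs.ne'
    refine ⟨((√(sqNorm w) : ℝ) : ℂ)⁻¹ • w, ?_, by rw [smul_inv_smul₀ hsC]⟩
    have e : sqNorm (((√(sqNorm w) : ℝ) : ℂ)⁻¹ • w) =
        (√(sqNorm w) * √(sqNorm w))⁻¹ * sqNorm w := by
      conv_lhs => rw [sqNorm]
      simp only [Pi.smul_apply, smul_eq_mul, map_mul, Complex.normSq_inv, Complex.normSq_ofReal]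
      conv_rhs => rw [sqNorm]
      rw [mul_add]
      simp only [sqNorm]
    rw [e, Real.mul_self_sqrt h.le, inv_mul_cancel₀ h.ne']

lemma abs_sqrt_quadForm_sub_le_of_unit {A B : Matrix (Fin 2) (Fin 2) ℂ} {d : ℝ}
    (H : ∀ w, sqNorm w = 1 → |√(quadForm A w) - √(quadForm B w)| ≤ d) (w : Fin 2 → ℂ) :
    |√(quadForm A w) - √(quadForm B w)| ≤ d * √(sqNorm w) := by
  obtain ⟨u, hu, hw⟩ := exists_unit_smul w
  have hr := Real.sqrt_nonneg (sqNorm w)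
  generalize √(sqNorm w) = r at hw hr ⊢
  rw [hw, quadForm_smul, quadForm_smul, Real.sqrt_mul (sq_nonneg r), Real.sqrt_mul (sq_nonneg r),
    Real.sqrt_sq hr, ← mul_sub, abs_mul, abs_of_nonneg hr, mul_comm]
  exact mul_le_mul_of_nonneg_right (H u hu) hr

lemma eq_of_quadForm_eq {A B : Matrix (Fin 2) (Fin 2) ℂ} (hA : IsDensityMatrix A)
    (hB : IsDensityMatrix B) (H : ∀ w, quadForm A w = quadForm B w) : A = B := by
  obtain ⟨p, α, rfl, -⟩ := hA.exists_eq
  obtain ⟨q, β, rfl, -⟩ := hB.exists_eq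
  simp only [quadForm_fin_two] at H
  have h0 := H ![1, 0]
  have h1 := H ![1, 1]
  have h2 := H ![1, Complex.I]
  simp at h0 h1 h2
  have hpq : (p : ℂ) ^ 2 = (q : ℂ) ^ 2 := by exact_mod_cast h0
  have hαβ : α = β := Complex.ext (by linarith) (by linarith)
  rw [hpq, hαβ]

lemma exists_isMax_unit (A B : Matrix (Fin 2) (Fin 2) ℂ) :
    ∃ v, sqNorm v = 1 ∧ ∀ w, sqNorm w = 1 →
      |√(quadForm A w) - √(quadForm B w)| ≤ |√(quadForm A v) - √(quadForm B v)| := by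
  have hc : IsCompact {v : Fin 2 → ℂ | sqNorm v = 1} := by
    refine (isCompact_closedBall (0 : Fin 2 → ℂ) 1).of_isClosed_subset ?_ ?_
    · refine isClosed_eq ?_ continuous_const
      unfold sqNorm
      fun_prop
    · intro v hv
      rw [mem_closedBall_zero_iff, pi_norm_le_iff_of_nonneg zero_le_one]
      have hv' : Complex.normSq (v 0) + Complex.normSq (v 1) = 1 := hv
      intro i
      rw [← abs_of_nonneg (norm_nonneg (v i)), ← sq_le_one_iff_abs_le_one, Complex.sq_norm]
      have h0 := Complex.normSq_nonneg (v 0)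
      have h1 := Complex.normSq_nonneg (v 1)
      fin_cases i
      · change Complex.normSq (v 0) ≤ 1; linarith
      · change Complex.normSq (v 1) ≤ 1; linarith
  have hcont : ∀ A : Matrix (Fin 2) (Fin 2) ℂ, Continuous (quadForm A) := by
    intro A
    unfold quadForm
    fun_prop
  have hA := hcont A
  have hB := hcont B
  obtain ⟨v, hv, hmax⟩ := hc.exists_isMaxOn ⟨![1, 0], by simp [sqNorm]⟩
    (f := fun w => |√(quadForm A w) - √(quadForm B w)|) (by fun_prop)
  exact ⟨v, hv, fun w hw => hmax hw⟩

/-- An optimal decomposition when the first basis vector is a maximizer. -/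
lemma exists_optimal_of_basis_max {A B : Matrix (Fin 2) (Fin 2) ℂ}
    (hA : IsDensityMatrix A) (hB : IsDensityMatrix B)
    (hlt : √(quadForm B ![1, 0]) < √(quadForm A ![1, 0]))
    (H : ∀ w, |√(quadForm A w) - √(quadForm B w)| ≤
      (√(quadForm A ![1, 0]) - √(quadForm B ![1, 0])) * √(sqNorm w)) :
    ∃ M : Fin 2 → Matrix (Fin 2) (Fin 2) ℂ,
      ∑ k, M k * (M k)ᴴ = A ∧ ∑ k, (M k)ᵀ * (M k)ᵀᴴ = B ∧
      ∑ k, Complex.normSq (M k 0 1 - M k 1 0) =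
        (√(quadForm A ![1, 0]) - √(quadForm B ![1, 0])) ^ 2 := by
  obtain ⟨p, α, rfl, hp0, hp1, hα⟩ := hA.exists_eq
  obtain ⟨q, β, rfl, hq0, hq1, hβ⟩ := hB.exists_eq
  have eA : √(quadForm !![(p : ℂ) ^ 2, α; star α, 1 - (p : ℂ) ^ 2] ![1, 0]) = p := by
    rw [quadForm_fin_two]; simp [Real.sqrt_sq hp0]
  have eB : √(quadForm !![(q : ℂ) ^ 2, β; star β, 1 - (q : ℂ) ^ 2] ![1, 0]) = q := by
    rw [quadForm_fin_two]; simp [Real.sqrt_sq hq0]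
  rw [eA, eB] at hlt H ⊢
  have hp : 0 < p := hq0.trans_lt hlt
  have hpC : (p : ℂ) ≠ 0 := by exact_mod_cast hp.ne'
  obtain ⟨hαβ, hk⟩ : α * q = β * p ∧ Complex.normSq α ≤ p ^ 2 * (1 - p ^ 2 - q ^ 2) := by
    rcases hq0.eq_or_lt with rfl | hq
    · have hβ0 : β = 0 := by
        rw [← Complex.normSq_eq_zero]
        exact le_antisymm (by simpa using hβ) (Complex.normSq_nonneg β)
      simpa [hβ0] using hα
    · have H' : ∀ x : ℂ, |√(p ^ 2 + 2 * (α * x).re + (1 - p ^ 2) * Complex.normSq x) -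
          √(q ^ 2 + 2 * (β * x).re + (1 - q ^ 2) * Complex.normSq x)| ≤
          (p - q) * √(1 + Complex.normSq x) := by
        intro x
        have := H ![1, x]
        rw [quadForm_fin_two, quadForm_fin_two] at this
        simpa [sqNorm] using this
      have H1 : |√(1 - p ^ 2) - √(1 - q ^ 2)| ≤ p - q := by
        have := H ![0, 1]
        rw [quadForm_fin_two, quadForm_fin_two] at this
        simpa [sqNorm] using this
      have hprop := off_diag_proportional hq hlt H'
      exact ⟨hprop, off_diag_bound hq hlt hp1 hα hprop H' H1⟩
  obtain ⟨z, hz⟩ : ∃ z, z = α / p := ⟨_, rfl⟩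
  have hαz : α = p * z := by rw [hz]; field_simp
  have hβz : β = q * z := by rw [hz]; field_simp; linear_combination -hαβ
  have hzk : 0 ≤ 1 - p ^ 2 - q ^ 2 - Complex.normSq z := by
    rw [hαz, map_mul, Complex.normSq_ofReal, ← sq] at hk
    linarith [le_of_mul_le_mul_left hk (by positivity)]
  obtain ⟨c, hc⟩ : ∃ c, c = √(1 - p ^ 2 - q ^ 2 - Complex.normSq z) := ⟨_, rfl⟩
  have hc2 : (c : ℂ) * c = 1 - p * p - q * q - z * star z := by
    have : c * c = 1 - p ^ 2 - q ^ 2 - Complex.normSq z := by rw [hc, Real.mul_self_sqrt hzk]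
    have h2 := congrArg (fun t : ℝ => (t : ℂ)) this
    push_cast [Complex.normSq_eq_conj_mul_self] at h2
    rw [h2]
    simp only [Complex.star_def]
    ring
  simp only [Complex.star_def] at hc2
  refine ⟨![!![0, (p : ℂ); (q : ℂ), star z], !![0, 0; 0, (c : ℂ)]], ?_, ?_, ?_⟩
  · ext i j
    simp only [Fin.sum_univ_two, Matrix.add_apply, Matrix.mul_apply]
    fin_cases i <;> fin_cases j <;> simp [hαz] <;> first | ring1 | linear_combination hc2
  · ext i j
    simp only [Fin.sum_univ_two, Matrix.add_apply, Matrix.mul_apply]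
    fin_cases i <;> fin_cases j <;> simp [hβz] <;> first | ring1 | linear_combination hc2
  · simp [Fin.sum_univ_two, ← Complex.ofReal_sub, Complex.normSq_ofReal, sq]

lemma quadForm_conj (U A : Matrix (Fin 2) (Fin 2) ℂ) (w : Fin 2 → ℂ) :
    quadForm (Uᴴ * A * U) w = quadForm A (U *ᵥ w) := by
  rw [quadForm, quadForm, star_mulVec, ← Matrix.mulVec_mulVec, ← Matrix.mulVec_mulVec,
    Matrix.dotProduct_mulVec (star w)]

lemma transpose_mul_conjTranspose_eq_one {U : Matrix (Fin 2) (Fin 2) ℂ} (hU : Uᴴ * U = 1) :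
    Uᵀ * Uᵀᴴ = 1 := by
  rw [show Uᵀᴴ = Uᴴᵀ from rfl, ← transpose_mul, hU, transpose_one]

lemma conj_sum_mul_conjTranspose {U A : Matrix (Fin 2) (Fin 2) ℂ} (hU : Uᴴ * U = 1)
    {N : Fin 2 → Matrix (Fin 2) (Fin 2) ℂ} (hN : ∑ k, N k * (N k)ᴴ = Uᴴ * A * U) :
    ∑ k, (U * N k * Uᵀ) * (U * N k * Uᵀ)ᴴ = A := by
  have hU' : U * Uᴴ = 1 := mul_eq_one_comm.mp hU
  have hUT := transpose_mul_conjTranspose_eq_one hU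
  have e : ∀ k, (U * N k * Uᵀ) * (U * N k * Uᵀ)ᴴ = U * (N k * (N k)ᴴ) * Uᴴ := by
    intro k
    calc _ = U * N k * (Uᵀ * Uᵀᴴ) * (N k)ᴴ * Uᴴ := by
          simp only [conjTranspose_mul, Matrix.mul_assoc]
      _ = _ := by rw [hUT]; simp only [Matrix.mul_one, Matrix.mul_assoc]
  rw [Finset.sum_congr rfl fun k _ => e k, ← Finset.sum_mul, ← Finset.mul_sum, hN]
  calc _ = (U * Uᴴ) * A * (U * Uᴴ) := by simp only [Matrix.mul_assoc]
    _ = A := by rw [hU', Matrix.one_mul, Matrix.mul_one]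

lemma exists_optimal_of_unit_max {A B : Matrix (Fin 2) (Fin 2) ℂ}
    (hA : IsDensityMatrix A) (hB : IsDensityMatrix B) {v : Fin 2 → ℂ} (hv : sqNorm v = 1)
    (hlt : √(quadForm B v) < √(quadForm A v))
    (H : ∀ w, |√(quadForm A w) - √(quadForm B w)| ≤
      (√(quadForm A v) - √(quadForm B v)) * √(sqNorm w)) :
    ∃ M : Fin 2 → Matrix (Fin 2) (Fin 2) ℂ,
      ∑ k, M k * (M k)ᴴ = A ∧ ∑ k, (M k)ᵀ * (M k)ᵀᴴ = B ∧
      ∑ k, Complex.normSq (M k 0 1 - M k 1 0) = (√(quadForm A v) - √(quadForm B v)) ^ 2 := by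
  have hvC : v 0 * star (v 0) + v 1 * star (v 1) = 1 := by
    simp only [Complex.star_def, Complex.mul_conj]
    exact_mod_cast hv
  obtain ⟨U, hUdef⟩ : ∃ U, U = !![v 0, -star (v 1); v 1, star (v 0)] := ⟨_, rfl⟩
  have hU : Uᴴ * U = 1 := by
    rw [hUdef]
    simp only [Complex.star_def] at hvC
    ext i j
    simp only [Matrix.mul_apply, Fin.sum_univ_two]
    fin_cases i <;> fin_cases j <;> simp <;> first | ring1 | linear_combination hvC
  have hUv : U *ᵥ ![1, 0] = v := by
    ext i
    fin_cases i <;> simp [hUdef, Matrix.mulVec]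
  have hden : ∀ {A : Matrix (Fin 2) (Fin 2) ℂ}, IsDensityMatrix A →
      IsDensityMatrix (Uᴴ * A * U) := by
    intro A hA
    refine ⟨hA.1.conjTranspose_mul_mul_same U, ?_⟩
    rw [Matrix.trace_mul_comm, ← Matrix.mul_assoc, mul_eq_one_comm.mp hU, Matrix.one_mul, hA.2]
  have hnorm : ∀ w, sqNorm (U *ᵥ w) = sqNorm w := by
    intro w
    rw [sqNorm_eq_quadForm_one, sqNorm_eq_quadForm_one, ← quadForm_conj, Matrix.mul_one, hU]
  obtain ⟨N, h1, h2, h3⟩ := exists_optimal_of_basis_max (hden hA) (hden hB)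
    (by simpa only [quadForm_conj, hUv] using hlt)
    (fun w => by simpa only [quadForm_conj, hUv, hnorm] using H (U *ᵥ w))
  refine ⟨fun k => U * N k * Uᵀ, conj_sum_mul_conjTranspose hU h1, ?_, ?_⟩
  · have e : ∀ k, (U * N k * Uᵀ)ᵀ = U * (N k)ᵀ * Uᵀ := by
      intro k
      simp only [transpose_mul, transpose_transpose, Matrix.mul_assoc]
    simp only [e]
    exact conj_sum_mul_conjTranspose hU h2
  · simp only [quadForm_conj, hUv] at h3
    rw [← h3]
    refine Finset.sum_congr rfl fun k _ => ?_
    congr 1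
    simp only [Complex.star_def] at hvC
    simp only [Matrix.mul_apply, Fin.sum_univ_two]
    simp [hUdef]
    linear_combination (N k 0 1 - N k 1 0) * hvC

lemma exists_symmetric_sqrt {A : Matrix (Fin 2) (Fin 2) ℂ} (hA : A.PosSemidef) :
    ∃ M : Matrix (Fin 2) (Fin 2) ℂ, M * Mᴴ = A ∧ Mᵀ = M := by
  obtain ⟨U, hU⟩ : ∃ U, U = (hA.1.eigenvectorUnitary : Matrix (Fin 2) (Fin 2) ℂ) := ⟨_, rfl⟩
  have hUU : Uᴴ * U = 1 := by
    rw [hU]; exact Unitary.coe_star_mul_self hA.1.eigenvectorUnitary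
  have hUT := transpose_mul_conjTranspose_eq_one hUU
  obtain ⟨D, hD⟩ : ∃ D : Matrix (Fin 2) (Fin 2) ℂ,
      D = diagonal fun i => ((√(hA.1.eigenvalues i) : ℝ) : ℂ) := ⟨_, rfl⟩
  have hDD : D * Dᴴ = diagonal fun i => ((hA.1.eigenvalues i : ℝ) : ℂ) := by
    rw [hD, diagonal_conjTranspose, diagonal_mul_diagonal]
    congr 1
    ext i
    simp only [Pi.star_apply, Complex.star_def, Complex.conj_ofReal]
    rw [← Complex.ofReal_mul, Real.mul_self_sqrt (hA.eigenvalues_nonneg i)]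
  refine ⟨U * D * Uᵀ, ?_, ?_⟩
  · calc _ = U * D * (Uᵀ * Uᵀᴴ) * Dᴴ * Uᴴ := by
          simp only [conjTranspose_mul, Matrix.mul_assoc]
      _ = U * (D * Dᴴ) * Uᴴ := by rw [hUT]; simp only [Matrix.mul_one, Matrix.mul_assoc]
      _ = A := by
          conv_rhs => rw [hA.1.spectral_theorem]
          rw [hDD, hU, Unitary.conjStarAlgAut_apply]
          rfl
  · have hDT : Dᵀ = D := by rw [hD, diagonal_transpose]
    simp only [transpose_mul, transpose_transpose, hDT, Matrix.mul_assoc]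

/-- Every pair of qubit states has a coupling whose cost is attained by the dual bound. -/
lemma exists_optimal {A B : Matrix (Fin 2) (Fin 2) ℂ}
    (hA : IsDensityMatrix A) (hB : IsDensityMatrix B) :
    ∃ v, sqNorm v = 1 ∧ ∃ M : Fin 2 → Matrix (Fin 2) (Fin 2) ℂ,
      ∑ k, M k * (M k)ᴴ = A ∧ ∑ k, (M k)ᵀ * (M k)ᵀᴴ = B ∧
      ∑ k, Complex.normSq (M k 0 1 - M k 1 0) = (√(quadForm A v) - √(quadForm B v)) ^ 2 := by
  obtain ⟨v, hv, hmax⟩ := exists_isMax_unit A B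
  have H := abs_sqrt_quadForm_sub_le_of_unit hmax
  refine ⟨v, hv, ?_⟩
  rcases lt_trichotomy (√(quadForm B v)) (√(quadForm A v)) with h | h | h
  · rw [abs_of_pos (sub_pos.mpr h)] at H
    exact exists_optimal_of_unit_max hA hB hv h H
  · have hAB : A = B := by
      refine eq_of_quadForm_eq hA hB fun w => ?_
      have := H w
      rw [h, sub_self, abs_zero, zero_mul] at this
      have := sub_eq_zero.mp (abs_nonpos_iff.mp this)
      rwa [Real.sqrt_inj (quadForm_nonneg hA.1 w) (quadForm_nonneg hB.1 w)] at this
    subst hAB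
    obtain ⟨M, hM, hMT⟩ := exists_symmetric_sqrt hA.1
    have hsymm : M 0 1 = M 1 0 := congrFun (congrFun hMT 1) 0
    exact ⟨![M, 0], by simp [Fin.sum_univ_two, hM],
      by simp [Fin.sum_univ_two, hMT, hM], by simp [Fin.sum_univ_two, hsymm]⟩
  · rw [abs_sub_comm, abs_of_pos (sub_pos.mpr h)] at H
    obtain ⟨M, h1, h2, h3⟩ := exists_optimal_of_unit_max hB hA hv h
      (fun w => by rw [abs_sub_comm]; exact H w)
    refine ⟨fun k => (M k)ᵀ, h2, by simpa using h1, ?_⟩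
    rw [sub_sq_comm, ← h3]
    refine Finset.sum_congr rfl fun k _ => ?_
    rw [← Complex.normSq_neg, neg_sub]
    rfl

lemma sqrt_quadForm_sub_le_QOT {A B : Matrix (Fin 2) (Fin 2) ℂ}
    (hA : IsDensityMatrix A) (hB : IsDensityMatrix B) {v : Fin 2 → ℂ} (hv : sqNorm v = 1) :
    |√(quadForm A v) - √(quadForm B v)| / √2 ≤ √(QOT (CQ 2) A B) := by
  obtain ⟨-, -, M, h1, h2, -⟩ := exists_optimal hA hB
  refine Real.le_sqrt_of_sq_le ?_
  rw [div_pow, sq_abs, Real.sq_sqrt zero_le_two]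
  refine le_csInf ⟨_, _, vecGram_mem_QCouplings hA h1 h2, rfl⟩ ?_
  rintro _ ⟨R, hR, rfl⟩
  exact sq_sqrt_quadForm_sub_le hR hv

lemma exists_sqrt_QOT_le {A B : Matrix (Fin 2) (Fin 2) ℂ}
    (hA : IsDensityMatrix A) (hB : IsDensityMatrix B) :
    ∃ v, sqNorm v = 1 ∧ √(QOT (CQ 2) A B) ≤ |√(quadForm A v) - √(quadForm B v)| / √2 := by
  obtain ⟨v, hv, M, h1, h2, h3⟩ := exists_optimal hA hB
  refine ⟨v, hv, Real.sqrt_le_iff.mpr ⟨by positivity, ?_⟩⟩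
  rw [div_pow, sq_abs, Real.sq_sqrt zero_le_two, ← h3, ← trace_CQ_mul_vecGram]
  exact csInf_le (bddBelow_cost A B) ⟨_, vecGram_mem_QCouplings hA h1 h2, rfl⟩

lemma sqrt_QOT_le_swap {A B : Matrix (Fin 2) (Fin 2) ℂ}
    (hA : IsDensityMatrix A) (hB : IsDensityMatrix B) :
    √(QOT (CQ 2) A B) ≤ √(QOT (CQ 2) B A) := by
  obtain ⟨v, hv, h⟩ := exists_sqrt_QOT_le hA hB
  rw [abs_sub_comm] at h
  exact h.trans (sqrt_quadForm_sub_le_QOT hB hA hv)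

/-- `√(T_{C^Q})` is a metric on qubit density matrices. -/
theorem sqrt_qot_is_metric_on_qubits :
    (∀ ρA ρB : Matrix (Fin 2) (Fin 2) ℂ, IsDensityMatrix ρA → IsDensityMatrix ρB →
      Real.sqrt (QOT (CQ 2) ρA ρB) = Real.sqrt (QOT (CQ 2) ρB ρA) ∧
      0 ≤ Real.sqrt (QOT (CQ 2) ρA ρB) ∧
      (Real.sqrt (QOT (CQ 2) ρA ρB) = 0 ↔ ρA = ρB)) ∧
    (∀ ρA ρB ρC : Matrix (Fin 2) (Fin 2) ℂ,
      IsDensityMatrix ρA → IsDensityMatrix ρB → IsDensityMatrix ρC →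
      Real.sqrt (QOT (CQ 2) ρA ρC) ≤
        Real.sqrt (QOT (CQ 2) ρA ρB) + Real.sqrt (QOT (CQ 2) ρB ρC)) := by
  refine ⟨fun A B hA hB => ⟨(sqrt_QOT_le_swap hA hB).antisymm (sqrt_QOT_le_swap hB hA),
    Real.sqrt_nonneg _, fun h => ?_, ?_⟩, fun A B C hA hB hC => ?_⟩
  · have H : ∀ w, sqNorm w = 1 → |√(quadForm A w) - √(quadForm B w)| ≤ 0 := by
      intro w hw
      have := sqrt_quadForm_sub_le_QOT hA hB hw
      rw [h, div_le_iff₀ (by positivity), zero_mul] at this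
      exact this
    refine eq_of_quadForm_eq hA hB fun w => ?_
    have := abs_sqrt_quadForm_sub_le_of_unit H w
    rw [zero_mul, abs_nonpos_iff, sub_eq_zero] at this
    rwa [Real.sqrt_inj (quadForm_nonneg hA.1 w) (quadForm_nonneg hB.1 w)] at this
  · rintro rfl
    obtain ⟨v, -, h⟩ := exists_sqrt_QOT_le hA hA
    exact le_antisymm (by simpa using h) (Real.sqrt_nonneg _)
  · obtain ⟨v, hv, h⟩ := exists_sqrt_QOT_le hA hC
    calc _ ≤ _ := h
      _ ≤ (|√(quadForm A v) - √(quadForm B v)| + |√(quadForm B v) - √(quadForm C v)|) / √2 := by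
        gcongr
        exact abs_sub_le _ _ _
      _ ≤ _ := by
        rw [add_div]
        exact add_le_add (sqrt_quadForm_sub_le_QOT hA hB hv) (sqrt_quadForm_sub_le_QOT hB hC hv)
end
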